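/- arXiv:1412.5090 — 11 statements merged into one kernel-verified Lean document; each statement's English description precedes it below -/
import Mathlib

section
/- Let W be a nonempty finite set and let ≼ be a binary relation on 𝒫(W), writing X ≺ Y for (X ≼ Y and not Y ≼ X). Then there exists a finitely additive probability measure P on 𝒫(W) such that for all X,Y ⊆ W, X ≼ Y iff P(X) ≤ P(Y), if and only if ≼ satisfies: (1) ∅ ≺ W; (2) ∅ ≼ X for all X ⊆ W; (3) for all X,Y ⊆ W, X ≼ Y or Y ≼ X; and (4) for every m ≥ 1 and all X_1,…,X_m,Y_1,…,Y_m ⊆ W, if X_i ≼ Y_i for each i ≤ m and ∑_{i=1}^m ι(X_i) = ∑_{i=1}^m ι(Y_i) as functions W → ℕ, then Y_j ≼ X_j for each j ≤ m. -/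
open Classical

theorem farkas_aux {V ι : Type} [AddCommGroup V] [Module ℚ V] (S : Finset ι) :
    ∀ (a : ι → V →ₗ[ℚ] ℚ) (g : V →ₗ[ℚ] ℚ),
      (∀ x, (∀ i ∈ S, 0 ≤ a i x) → 0 ≤ g x) →
      ∃ c : ι → ℚ, (∀ i, 0 ≤ c i) ∧ ∀ x, g x = ∑ i ∈ S, c i * a i x := by
  induction S using Finset.induction_on with
  | empty =>
    intro a g h
    refine ⟨fun _ => 0, fun _ => le_rfl, fun x => ?_⟩
    have h1 := h x (by simp)
    have h2 := h (-x) (by simp)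
    simp only [map_neg] at h2
    simp only [Finset.sum_empty]
    linarith
  | insert k S hk ih =>
    intro a g h
    by_cases h0 : ∀ x, (∀ i ∈ S, 0 ≤ a i x) → 0 ≤ g x
    · obtain ⟨c, hc, hg⟩ := ih a g h0
      refine ⟨fun i => if i = k then 0 else c i, fun i => ?_, fun x => ?_⟩
      · dsimp only
        split_ifs
        · exact le_rfl
        · exact hc i
      · rw [Finset.sum_insert hk, hg x]
        simp only [if_true, zero_mul, zero_add]
        refine Finset.sum_congr rfl fun i hi => ?_
        have : i ≠ k := fun e => hk (e ▸ hi)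
        simp [this]
    · push Not at h0
      obtain ⟨x0, hx0, hgx0⟩ := h0
      have hak : a k x0 < 0 := by
        by_contra hn
        push Not at hn
        have := h x0 (by
          intro i hi
          rcases Finset.mem_insert.1 hi with rfl | hi
          · exact hn
          · exact hx0 i hi)
        linarith
      have hpos : 0 < (-(a k x0))⁻¹ := inv_pos.2 (by linarith)
      obtain ⟨u, hu⟩ : ∃ u, u = (-(a k x0))⁻¹ • x0 := ⟨_, rfl⟩
      have hku : a k u = -1 := by
        rw [hu, map_smul, smul_eq_mul]
        have : a k x0 ≠ 0 := hak.ne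
        field_simp
      have hgu : g u ≤ 0 := by
        rw [hu, map_smul, smul_eq_mul]
        exact mul_nonpos_of_nonneg_of_nonpos hpos.le hgx0.le
      have hau : ∀ i ∈ S, 0 ≤ a i u := by
        intro i hi
        rw [hu, map_smul, smul_eq_mul]
        exact mul_nonneg hpos.le (hx0 i hi)
      let T : V →ₗ[ℚ] V := LinearMap.id + (a k).smulRight u
      have hT : ∀ x, T x = x + a k x • u := fun x => by simp [T]
      obtain ⟨c, hc, hg⟩ := ih (fun i => (a i).comp T) (g.comp T) (by
        intro x hx
        refine h (T x) ?_
        intro i hi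
        rcases Finset.mem_insert.1 hi with rfl | hi
        · rw [hT, map_add, map_smul, hku]; simp
        · exact hx i hi)
      have hsum : 0 ≤ ∑ i ∈ S, c i * a i u :=
        Finset.sum_nonneg fun i hi => mul_nonneg (hc i) (hau i hi)
      refine ⟨fun i => if i = k then (∑ i ∈ S, c i * a i u) - g u else c i,
        fun i => ?_, fun x => ?_⟩
      · dsimp only
        split_ifs
        · linarith
        · exact hc i
      · rw [Finset.sum_insert hk]
        have e : ∑ i ∈ S, (if i = k then (∑ i ∈ S, c i * a i u) - g u else c i) * a i x
            = ∑ i ∈ S, c i * a i x := by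
          refine Finset.sum_congr rfl fun i hi => ?_
          have : i ≠ k := fun e => hk (e ▸ hi)
          simp [this]
        rw [e]
        have := hg x
        simp only [LinearMap.comp_apply, hT, map_add, map_smul, smul_eq_mul, mul_add,
          Finset.sum_add_distrib] at this
        have e2 : ∑ i ∈ S, c i * (a k x * a i u) = a k x * ∑ i ∈ S, c i * a i u := by
          rw [Finset.mul_sum]
          exact Finset.sum_congr rfl fun i _ => by ring
        rw [e2] at this
        simp only [if_true]
        linarith

theorem clear_denoms {ι : Type} [Fintype ι] (c : ι → ℚ) (hc : ∀ i, 0 ≤ c i) :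
    ∃ D : ℕ, 0 < D ∧ ∃ n : ι → ℕ, ∀ i, (D : ℚ) * c i = n i := by
  refine ⟨∏ i, (c i).den, Finset.prod_pos fun i _ => (c i).den_pos,
    fun i => (∏ j ∈ Finset.univ.erase i, (c j).den) * (c i).num.toNat, fun i => ?_⟩
  rw [← Finset.mul_prod_erase _ _ (Finset.mem_univ i)]
  have h1 : ((c i).den : ℚ) * c i = (c i).num := Rat.den_mul_eq_num (c i)
  have h2 : (((c i).num.toNat : ℕ) : ℚ) = (c i).num := by
    have : (((c i).num.toNat : ℕ) : ℤ) = (c i).num :=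
      Int.toNat_of_nonneg (Rat.num_nonneg.2 (hc i))
    exact_mod_cast this
  rw [Nat.cast_mul, Nat.cast_mul, h2, ← h1]
  ring

theorem P_sum {W : Type} [Fintype W] (P : Set W → ℝ)
    (hadd : ∀ X Y : Set W, X ∩ Y = ∅ → P (X ∪ Y) = P X + P Y) (X : Set W) :
    P X = ∑ w, if w ∈ X then P {w} else 0 := by
  have h0 : P ∅ = 0 := by
    have := hadd ∅ ∅ (by simp)
    simp only [Set.union_self] at this
    linarith
  have key : ∀ S : Finset W, P (S : Set W) = ∑ w ∈ S, P {w} := by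
    intro S
    induction S using Finset.induction_on with
    | empty => simpa using h0
    | insert a S ha ih =>
      rw [Finset.sum_insert ha, ← ih, ← hadd, Finset.coe_insert, Set.insert_eq]
      ext x
      simp only [Set.mem_inter_iff, Set.mem_singleton_iff, Finset.mem_coe,
        Set.mem_empty_iff_false, iff_false]
      rintro ⟨rfl, h⟩
      exact ha h
  rw [← Finset.sum_filter, ← key]
  congr 1
  ext x
  simp

theorem scott_forward {W : Type} [Fintype W] (P : Set W → ℝ)
    (hadd : ∀ X Y : Set W, X ∩ Y = ∅ → P (X ∪ Y) = P X + P Y)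
    (m : ℕ) (X Y : Fin m → Set W) (hle : ∀ i, P (X i) ≤ P (Y i))
    (hc : ∀ w : W, (Finset.univ.filter (fun i => w ∈ X i)).card =
                 (Finset.univ.filter (fun i => w ∈ Y i)).card) (j : Fin m) :
    P (Y j) ≤ P (X j) := by
  have hs : ∀ Z : Fin m → Set W, ∑ i, P (Z i) =
      ∑ w, ((Finset.univ.filter (fun i => w ∈ Z i)).card : ℝ) * P {w} := by
    intro Z
    rw [Finset.sum_congr rfl fun i _ => P_sum P hadd (Z i), Finset.sum_comm]
    refine Finset.sum_congr rfl fun w _ => ?_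
    rw [← Finset.sum_filter, Finset.sum_const, nsmul_eq_mul]
  have he : ∑ i, P (X i) = ∑ i, P (Y i) := by
    rw [hs, hs]
    exact Finset.sum_congr rfl fun w _ => by rw [hc w]
  by_contra hn
  push Not at hn
  have := Finset.sum_lt_sum (fun i (_ : i ∈ Finset.univ) => hle i) ⟨j, Finset.mem_univ j, hn⟩
  linarith

theorem scott_fintype {W : Type} (le : Set W → Set W → Prop)
    (h4 : ∀ m : ℕ, 1 ≤ m → ∀ X Y : Fin m → Set W,
       (∀ i, le (X i) (Y i)) →
       (∀ w : W, (Finset.univ.filter (fun i => w ∈ X i)).card =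
                 (Finset.univ.filter (fun i => w ∈ Y i)).card) →
       ∀ j, le (Y j) (X j))
    {K : Type} [Fintype K] (X Y : K → Set W) (hle : ∀ i, le (X i) (Y i))
    (hc : ∀ w : W, (∑ i, if w ∈ X i then (1 : ℚ) else 0) = ∑ i, if w ∈ Y i then (1 : ℚ) else 0)
    (j : K) : le (Y j) (X j) := by
  let e := Fintype.equivFin K
  have := h4 (Fintype.card K) (Fintype.card_pos_iff.2 ⟨j⟩) (fun i => X (e.symm i))
    (fun i => Y (e.symm i)) (fun i => hle _) (fun w => by
      have h := hc w
      rw [← Equiv.sum_comp e.symm, ← Equiv.sum_comp e.symm (fun i => if w ∈ Y i then (1 : ℚ) else 0)] at h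
      rw [Finset.sum_boole, Finset.sum_boole] at h
      exact_mod_cast h) (e j)
  simpa using this

/-- the functional p ↦ p(Y) - p(X) -/
noncomputable def diffFun {W : Type} [Fintype W] (X Y : Set W) : (W → ℚ) →ₗ[ℚ] ℚ :=
  ∑ w, ((if w ∈ Y then (1 : ℚ) else 0) - (if w ∈ X then (1 : ℚ) else 0)) • LinearMap.proj w

theorem diffFun_apply {W : Type} [Fintype W] (X Y : Set W) (p : W → ℚ) :
    diffFun X Y p = (∑ w, if w ∈ Y then p w else 0) - ∑ w, if w ∈ X then p w else 0 := by
  simp [diffFun, sub_mul, Finset.sum_sub_distrib]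

theorem diffFun_single {W : Type} [Fintype W] (X Y : Set W) (w : W) :
    diffFun X Y (Pi.single w 1) = (if w ∈ Y then (1 : ℚ) else 0) - (if w ∈ X then (1 : ℚ) else 0) := by
  simp [diffFun, Pi.single_apply]

theorem sigma_sum_aux {I : Type} [Fintype I] (n N : I → ℕ) (j : I) (D : ℕ)
    (hN : ∀ i, N i = n i + if i = j then D else 0) (f : I → ℚ) :
    (∑ k : (Σ i : I, Fin (N i)), f k.1) =
      (∑ i, (n i : ℚ) * f i) + D * f j := by
  rw [Fintype.sum_sigma]
  simp [hN, add_mul, Finset.sum_add_distrib]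

theorem scott_sep {W : Type} [Fintype W] (le : Set W → Set W → Prop)
    (h4 : ∀ m : ℕ, 1 ≤ m → ∀ X Y : Fin m → Set W,
       (∀ i, le (X i) (Y i)) →
       (∀ w : W, (Finset.univ.filter (fun i => w ∈ X i)).card =
                 (Finset.univ.filter (fun i => w ∈ Y i)).card) →
       ∀ j, le (Y j) (X j))
    (A B : Set W) (hAB : le A B) (hBA : ¬ le B A) :
    ∃ p : W → ℚ, (∀ X Y, le X Y → 0 ≤ diffFun X Y p) ∧ 0 < diffFun A B p := by
  by_contra hcon
  push Not at hcon
  let I := {q : Set W × Set W // le q.1 q.2}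
  let j : I := ⟨(A, B), hAB⟩
  obtain ⟨c, hc, hg⟩ := farkas_aux (Finset.univ : Finset I)
    (fun q => diffFun q.1.1 q.1.2) (-diffFun A B) (by
      intro x hx
      have := hcon x (fun X Y h => hx ⟨(X, Y), h⟩ (Finset.mem_univ _))
      simpa using this)
  obtain ⟨D, hD, n, hn⟩ := clear_denoms c hc
  let N : I → ℕ := fun i => n i + if i = j then D else 0
  have hNj : 0 < N j := by simp only [N, if_true]; omega
  have := scott_fintype le h4 (K := Σ i : I, Fin (N i)) (fun k => k.1.1.1) (fun k => k.1.1.2)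
    (fun k => k.1.2) (fun w => by
      have h := hg (Pi.single w 1)
      simp only [LinearMap.neg_apply, diffFun_single] at h
      have h' := congrArg (fun t => (D : ℚ) * t) h
      simp only [Finset.mul_sum, ← mul_assoc, hn] at h'
      have hs := fun f : I → ℚ => sigma_sum_aux n N j D
        (fun i => by simp only [N]; congr) f
      refine (hs fun i => if w ∈ i.1.1 then 1 else 0).trans
        (Eq.trans ?_ (hs fun i => if w ∈ i.1.2 then 1 else 0).symm)
      simp only [mul_sub, Finset.sum_sub_distrib] at h'
      simp only [j]
      linarith) ⟨j, ⟨0, hNj⟩⟩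
  exact hBA this

theorem scott_backward {W : Type} [Fintype W] (le : Set W → Set W → Prop)
    (h1 : le ∅ Set.univ ∧ ¬ le Set.univ ∅)
    (h2 : ∀ X : Set W, le ∅ X) (h3 : ∀ X Y : Set W, le X Y ∨ le Y X)
    (h4 : ∀ m : ℕ, 1 ≤ m → ∀ X Y : Fin m → Set W,
       (∀ i, le (X i) (Y i)) →
       (∀ w : W, (Finset.univ.filter (fun i => w ∈ X i)).card =
                 (Finset.univ.filter (fun i => w ∈ Y i)).card) →
       ∀ j, le (Y j) (X j)) :
    ∃ P : Set W → ℝ,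
      (∀ X : Set W, 0 ≤ P X) ∧ (∀ X : Set W, P X ≤ 1) ∧ P Set.univ = 1 ∧
      (∀ X Y : Set W, X ∩ Y = ∅ → P (X ∪ Y) = P X + P Y) ∧
      (∀ X Y : Set W, le X Y ↔ P X ≤ P Y) := by
  have hsep : ∀ q : Set W × Set W, ∃ p : W → ℚ, (∀ X Y, le X Y → 0 ≤ diffFun X Y p) ∧
      (le q.1 q.2 → ¬ le q.2 q.1 → 0 < diffFun q.1 q.2 p) := by
    intro q
    by_cases h : le q.1 q.2 ∧ ¬ le q.2 q.1
    · obtain ⟨p, hp, hp'⟩ := scott_sep le h4 q.1 q.2 h.1 h.2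
      exact ⟨p, hp, fun _ _ => hp'⟩
    · exact ⟨0, fun X Y _ => by simp, fun a b => absurd ⟨a, b⟩ h⟩
  choose p hp hp' using hsep
  obtain ⟨r, hr⟩ : ∃ r, r = ∑ q, p q := ⟨_, rfl⟩
  have hr1 : ∀ X Y, le X Y → 0 ≤ diffFun X Y r := by
    intro X Y h
    rw [hr, map_sum]
    exact Finset.sum_nonneg fun q _ => hp q X Y h
  have hr2 : ∀ X Y, le X Y → ¬ le Y X → 0 < diffFun X Y r := by
    intro X Y h h'
    rw [hr, map_sum]
    exact Finset.sum_pos' (fun q _ => hp q X Y h) ⟨(X, Y), Finset.mem_univ _, hp' (X, Y) h h'⟩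
  obtain ⟨Q, hQ⟩ : ∃ Q : Set W → ℚ, ∀ X, Q X = ∑ w, if w ∈ X then r w else 0 := ⟨_, fun _ => rfl⟩
  simp only [diffFun_apply, ← hQ] at hr1 hr2
  have hiff : ∀ X Y, le X Y ↔ Q X ≤ Q Y := by
    intro X Y
    constructor
    · intro h
      linarith [hr1 X Y h]
    · intro h
      by_contra hn
      have := hr2 Y X ((h3 X Y).resolve_left hn) hn
      linarith
  have hQ0 : Q ∅ = 0 := by simp [hQ]
  have hQadd : ∀ X Y : Set W, X ∩ Y = ∅ → Q (X ∪ Y) = Q X + Q Y := by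
    intro X Y h
    rw [hQ, hQ, hQ, ← Finset.sum_add_distrib]
    refine Finset.sum_congr rfl fun w _ => ?_
    have hw : ¬ (w ∈ X ∧ w ∈ Y) := fun hw => by
      have : w ∈ X ∩ Y := hw
      rw [h] at this
      exact this
    by_cases hx : w ∈ X <;> by_cases hy : w ∈ Y
    · exact absurd ⟨hx, hy⟩ hw
    all_goals simp [hx, hy]
  have hQnn : ∀ X, 0 ≤ Q X := fun X => by
    have := (hiff ∅ X).1 (h2 X)
    linarith
  have hQu : 0 < Q Set.univ := by
    have := hr2 _ _ h1.1 h1.2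
    linarith
  have hQle : ∀ X, Q X ≤ Q Set.univ := fun X => by
    have := hQadd X Xᶜ (by simp)
    rw [Set.union_compl_self] at this
    linarith [hQnn Xᶜ]
  refine ⟨fun X => ((Q X / Q Set.univ : ℚ) : ℝ), fun X => ?_, fun X => ?_, ?_, fun X Y h => ?_,
    fun X Y => ?_⟩
  · beta_reduce
    exact_mod_cast div_nonneg (hQnn X) hQu.le
  · beta_reduce
    exact_mod_cast (div_le_one hQu).2 (hQle X)
  · beta_reduce
    exact_mod_cast div_self hQu.ne'
  · dsimp only
    rw [hQadd X Y h, add_div, Rat.cast_add]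
  · rw [hiff, Rat.cast_le, div_le_div_iff_of_pos_right hQu]

/-- Kraft–Pratt–Seidenberg/Scott: a binary relation `≼` on `𝒫(W)` is realizable by a
finitely additive probability measure iff it satisfies the four Scott conditions. -/
theorem scott_realizability {W : Type} [Finite W] [Nonempty W]
    (le : Set W → Set W → Prop) :
    (∃ P : Set W → ℝ,
      (∀ X : Set W, 0 ≤ P X) ∧ (∀ X : Set W, P X ≤ 1) ∧ P Set.univ = 1 ∧
      (∀ X Y : Set W, X ∩ Y = ∅ → P (X ∪ Y) = P X + P Y) ∧
      (∀ X Y : Set W, le X Y ↔ P X ≤ P Y)) ↔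
    ((le ∅ Set.univ ∧ ¬ le Set.univ ∅) ∧
     (∀ X : Set W, le ∅ X) ∧
     (∀ X Y : Set W, le X Y ∨ le Y X) ∧
     (∀ m : ℕ, 1 ≤ m → ∀ X Y : Fin m → Set W,
       (∀ i, le (X i) (Y i)) →
       (∀ w : W, (Finset.univ.filter (fun i => w ∈ X i)).card =
                 (Finset.univ.filter (fun i => w ∈ Y i)).card) →
       ∀ j, le (Y j) (X j))) := by
  have := Fintype.ofFinite W
  constructor
  · rintro ⟨P, h0, _, hu, hadd, hle⟩
    have he : P ∅ = 0 := by
      have := hadd ∅ ∅ (by simp)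
      simp only [Set.union_self] at this
      linarith
    refine ⟨⟨(hle _ _).2 ?_, fun h => ?_⟩, fun X => (hle _ _).2 ?_, fun X Y => ?_, ?_⟩
    · rw [he]; exact h0 _
    · have := (hle _ _).1 h
      linarith
    · rw [he]; exact h0 _
    · rw [hle, hle]; exact le_total _ _
    · intro m _ X Y hXY hc j
      exact (hle _ _).2 (scott_forward P hadd m X Y (fun i => (hle _ _).1 (hXY i)) hc j)
  · rintro ⟨h1, h2, h3, h4⟩
    exact scott_backward le h1 h2 h3 h4
end

section
/- Let c ∈ (0, 1/2] ∩ ℚ and let M = (W,R,V,P) be an epistemic probability model. For every w ∈ W and all X,Y ⊆ W: if P_w(X) ≥ 1 − c and there exists v ∈ [w] with v ∉ X and v ∈ Y, then P_w(X ∪ Y) > c. (This is the validity of the scheme (SC): if φ is consistent with the agent's threshold-c beliefs and ¬φ ∧ ψ is consistent with her knowledge, then she believes φ ∨ ψ with threshold c.) -/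
open Classical

/-- An epistemic probability model: finite nonempty world set, S5 (equivalence)
accessibility relation, valuation, and a finitely additive probability measure
with full support. -/
structure EPM (W A : Type) where
  finite : Finite W
  nonempty : Nonempty W
  R : W → W → Prop
  equiv : Equivalence R
  V : W → Set A
  P : Set W → ℝ
  nonneg : ∀ X : Set W, 0 ≤ P X
  le_one : ∀ X : Set W, P X ≤ 1
  norm : P Set.univ = 1
  add : ∀ X Y : Set W, X ∩ Y = ∅ → P (X ∪ Y) = P X + P Y
  full : ∀ w : W, 0 < P {w}

/-- The equivalence class `[w]` of a world. -/
def EPM.cl {W A : Type} (M : EPM W A) (w : W) : Set W := {v | M.R w v}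

/-- `P_w(X) := P(X ∩ [w]) / P([w])`. -/
noncomputable def EPM.Pw {W A : Type} (M : EPM W A) (w : W) (X : Set W) : ℝ :=
  M.P (X ∩ M.cl w) / M.P (M.cl w)

theorem EPM.mono' {W A : Type} (M : EPM W A) {S T : Set W} (h : S ⊆ T) : M.P S ≤ M.P T := by
  have h3 := M.add S (T \ S) (by simp)
  rw [Set.union_diff_cancel h] at h3
  have := M.nonneg (T \ S)
  linarith

/-- Validity of the scheme (SC) for thresholds `c ∈ (0, 1/2] ∩ ℚ`: if `P_w(X) ≥ 1 - c`
and some epistemically possible world is in `Y` but not `X`, then `P_w(X ∪ Y) > c`. -/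
theorem sc_valid {W A : Type} (c : ℚ) (hc0 : 0 < c) (hc12 : c ≤ 1/2)
    (M : EPM W A) (w : W) (X Y : Set W)
    (h1 : 1 - (c : ℝ) ≤ M.Pw w X)
    (h2 : ∃ v ∈ M.cl w, v ∉ X ∧ v ∈ Y) :
    (c : ℝ) < M.Pw w (X ∪ Y) := by
  obtain ⟨v, hv, hvX, hvY⟩ := h2
  have hc : (c : ℝ) ≤ 1 / 2 := by
    have : (c : ℝ) ≤ ((1 / 2 : ℚ) : ℝ) := by exact_mod_cast hc12
    simpa using this
  have hpos : 0 < M.P (M.cl w) :=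
    lt_of_lt_of_le (M.full v) (M.mono' (Set.singleton_subset_iff.mpr hv))
  have hdisj : (X ∩ M.cl w) ∩ {v} = ∅ := by
    ext x
    simp only [Set.mem_inter_iff, Set.mem_singleton_iff, Set.mem_empty_iff_false, iff_false]
    rintro ⟨⟨hx, _⟩, rfl⟩
    exact hvX hx
  have hadd := M.add _ _ hdisj
  have hsub : (X ∩ M.cl w) ∪ {v} ⊆ (X ∪ Y) ∩ M.cl w := by
    rintro x (⟨hx, hx'⟩ | rfl)
    · exact ⟨Or.inl hx, hx'⟩
    · exact ⟨Or.inr hvY, hv⟩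
  have hle := M.mono' hsub
  have hf := M.full v
  have hlt : M.Pw w X < M.Pw w (X ∪ Y) := by
    unfold EPM.Pw
    exact div_lt_div_of_pos_right (by linarith) hpos
  linarith
end

section
/- Let c ∈ (0, 1/2] ∩ ℚ, let M = (W,R,V,P) be an epistemic probability model, let w ∈ W, let m ≥ 1, and let X_1,…,X_m,Y_1,…,Y_m ⊆ W. If for every v ∈ [w] the number of indices i ∈ {1,…,m} with v ∈ X_i is at most the number of indices i with v ∈ Y_i, and P_w(X_1) > c, and P_w(X_i) ≥ 1 − c for all 2 ≤ i ≤ m, then there exists j ∈ {1,…,m} with P_w(Y_j) > c. (This is the validity of the scheme (Scott) for belief with threshold c ≤ 1/2.) -/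
open Classical

theorem EPM.P_sum_aux {W A : Type} (M : EPM W A) (s : Finset W) :
    M.P (s : Set W) = ∑ v ∈ s, M.P {v} := by
  induction s using Finset.induction_on with
  | empty =>
    have h := M.add ∅ ∅ (by simp)
    simp at h
    simpa using h
  | insert a s ha ih =>
    rw [Finset.sum_insert ha, ← ih, Finset.coe_insert, Set.insert_eq]
    apply M.add
    ext x
    simp only [Set.mem_inter_iff, Set.mem_singleton_iff, Finset.mem_coe, Set.mem_empty_iff_false,
      iff_false, not_and]
    rintro rfl
    exact ha

theorem EPM.sum_aux {W A : Type} [Fintype W] (M : EPM W A) (w : W) {m : ℕ} (X : Fin m → Set W) :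
    ∑ i, M.P (X i ∩ M.cl w) = ∑ v, if v ∈ M.cl w then
      ((Finset.univ.filter (fun i => v ∈ X i)).card : ℝ) * M.P {v} else 0 := by
  have h : ∀ S : Set W, M.P S = ∑ v, if v ∈ S then M.P {v} else 0 := by
    intro S
    have := M.P_sum_aux (Finset.univ.filter (fun v => v ∈ S))
    rw [Finset.sum_filter] at this
    rw [← this]
    congr 1
    ext x
    simp
  simp_rw [h (X _ ∩ M.cl w)]
  rw [Finset.sum_comm]
  refine Finset.sum_congr rfl fun v _ => ?_
  by_cases hv : v ∈ M.cl w
  · simp [hv, ← Finset.sum_filter]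
  · simp [hv]

/-- Validity of the scheme (Scott) for thresholds `c ∈ (0, 1/2] ∩ ℚ`. -/
theorem scott_scheme_valid {W A : Type} (c : ℚ) (hc0 : 0 < c) (hc12 : c ≤ 1/2)
    (M : EPM W A) (w : W) (m : ℕ) (hm : 1 ≤ m)
    (X Y : Fin m → Set W)
    (hcount : ∀ v ∈ M.cl w,
      (Finset.univ.filter (fun i => v ∈ X i)).card ≤
      (Finset.univ.filter (fun i => v ∈ Y i)).card)
    (hX1 : (c : ℝ) < M.Pw w (X ⟨0, hm⟩))
    (hXi : ∀ i : Fin m, i ≠ ⟨0, hm⟩ → 1 - (c : ℝ) ≤ M.Pw w (X i)) :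
    ∃ j : Fin m, (c : ℝ) < M.Pw w (Y j) := by
  by_contra hcon
  push Not at hcon
  have := M.finite
  have := Fintype.ofFinite W
  have h1 : ∑ i, M.Pw w (X i) ≤ ∑ i, M.Pw w (Y i) := by
    unfold EPM.Pw
    rw [← Finset.sum_div, ← Finset.sum_div, M.sum_aux, M.sum_aux]
    refine div_le_div_of_nonneg_right (Finset.sum_le_sum fun v _ => ?_) (M.nonneg _)
    split_ifs with hv
    · exact mul_le_mul_of_nonneg_right (by exact_mod_cast hcount v hv) (M.nonneg _)
    · exact le_rfl
  have hc : (c : ℝ) ≤ 1 / 2 := by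
    have : (c : ℝ) ≤ ((1 / 2 : ℚ) : ℝ) := by exact_mod_cast hc12
    simpa using this
  have h2 : ∑ i, M.Pw w (Y i) < ∑ i, M.Pw w (X i) := by
    refine Finset.sum_lt_sum (fun i _ => ?_) ⟨⟨0, hm⟩, Finset.mem_univ _, (hcon _).trans_lt hX1⟩
    by_cases hi : i = ⟨0, hm⟩
    · subst hi
      exact (hcon _).trans hX1.le
    · linarith [hcon i, hXi i hi]
  linarith
end

section
/- Let W be a finite nonempty set, let P be a finitely additive probability measure on 𝒫(W), let m ≥ 1, and let X_1,…,X_m,Y_1,…,Y_m ⊆ W. If for every v ∈ W the number of indices i ∈ {1,…,m} with v ∈ X_i is at most the number of indices i with v ∈ Y_i (equivalently, ∑_{i=1}^m ι(X_i) ≤ ∑_{i=1}^m ι(Y_i) pointwise, where ι denotes characteristic functions), then ∑_{i=1}^m P(X_i) ≤ ∑_{i=1}^m P(Y_i). -/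
open Classical

/-- If every world belongs to at least as many of the `Y i` as of the `X i`, then
`∑ P(X i) ≤ ∑ P(Y i)` for any finitely additive probability measure `P`. -/
theorem sum_prob_mono {W : Type} [Finite W] [Nonempty W]
    (P : Set W → ℝ)
    (hnn : ∀ X : Set W, 0 ≤ P X) (hle : ∀ X : Set W, P X ≤ 1)
    (hP1 : P Set.univ = 1)
    (hadd : ∀ X Y : Set W, X ∩ Y = ∅ → P (X ∪ Y) = P X + P Y)
    (m : ℕ) (hm : 1 ≤ m) (X Y : Fin m → Set W)
    (hcount : ∀ v : W,
      (Finset.univ.filter (fun i => v ∈ X i)).card ≤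
      (Finset.univ.filter (fun i => v ∈ Y i)).card) :
    ∑ i, P (X i) ≤ ∑ i, P (Y i) := by
  have := Fintype.ofFinite W
  have h0 : P ∅ = 0 := by
    have h := hadd ∅ ∅ (by simp)
    simp only [Set.union_self] at h
    linarith
  have hfin : ∀ s : Finset W, P (s : Set W) = ∑ v ∈ s, P {v} := by
    intro s
    induction s using Finset.induction_on with
    | empty => simpa using h0
    | insert a s ha ih =>
      rw [Finset.sum_insert ha, Finset.coe_insert, Set.insert_eq, hadd, ih]
      ext x
      simp only [Set.mem_inter_iff, Set.mem_singleton_iff, Finset.mem_coe,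
        Set.mem_empty_iff_false, iff_false, not_and]
      rintro rfl
      exact ha
  have hset : ∀ A : Set W, P A = ∑ v : W, if v ∈ A then P {v} else 0 := by
    intro A
    have h := hfin (Finset.univ.filter (fun v => v ∈ A))
    rw [Finset.sum_filter] at h
    rw [← h]
    congr 1
    ext x
    simp
  have key : ∀ Z : Fin m → Set W, ∑ i, P (Z i) =
      ∑ v : W, ((Finset.univ.filter (fun i => v ∈ Z i)).card : ℝ) * P {v} := by
    intro Z
    rw [Finset.sum_congr rfl (fun i _ => hset (Z i)), Finset.sum_comm]
    refine Finset.sum_congr rfl (fun v _ => ?_)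
    rw [← Finset.sum_filter, Finset.sum_const, nsmul_eq_mul]
  rw [key X, key Y]
  refine Finset.sum_le_sum (fun v _ => ?_)
  exact mul_le_mul_of_nonneg_right (by exact_mod_cast hcount v) (hnn _)
end

section
/- Let W = {a,b,c,d,e,f,g} be a 7-element set, and define 𝒳 = {efg, abg, adf, bde, ace, cdg, bcf} and 𝒴 = {abcd, cdef, bceg, acfg, bdfg, abef, adeg} (writing xyz for {x,y,z} and wxyz for {w,x,y,z}). Then for every c ∈ (0,1) there is no finitely additive probability measure P on 𝒫(W) such that P(X) > c for every X ∈ 𝒳 and P(Y) ≤ c for every Y ∈ 𝒴. Consequently, the epistemic neighborhood model with world set W, R = W × W, V(w) = {w}, and N(w) = 𝒩 := {X' : ∃X ∈ 𝒳 with X ⊆ X' ⊆ W} for every w has no agreeing probability measure for any threshold c ∈ (0,1) ∩ ℚ. -/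
open Classical

/-- An epistemic neighborhood model. -/
structure ENM (W A : Type) where
  finite : Finite W
  nonempty : Nonempty W
  R : W → W → Prop
  equiv : Equivalence R
  V : W → Set A
  N : W → Set (Set W)
  kbc : ∀ w : W, ∀ X ∈ N w, X ⊆ {v | R w v}
  kbf : ∀ w : W, ∅ ∉ N w
  contains_class : ∀ w : W, {v | R w v} ∈ N w
  agreeN : ∀ w v : W, R w v → N v = N w
  kbm : ∀ w : W, ∀ X ∈ N w, ∀ Y : Set W, X ⊆ Y → Y ⊆ {v | R w v} → Y ∈ N w

/-- The equivalence class `[w]` of a world. -/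
def ENM.cl {W A : Type} (M : ENM W A) (w : W) : Set W := {v | M.R w v}

/-- The worlds `a,…,g` are `0,…,6 : Fin 7`.  The family `𝒳`. -/
def calX : Set (Set (Fin 7)) :=
  {{4, 5, 6}, {0, 1, 6}, {0, 3, 5}, {1, 3, 4}, {0, 2, 4}, {2, 3, 6}, {1, 2, 5}}

/-- The family `𝒴`. -/
def calY : Set (Set (Fin 7)) :=
  {{0, 1, 2, 3}, {2, 3, 4, 5}, {1, 2, 4, 6}, {0, 2, 5, 6}, {1, 3, 5, 6},
   {0, 1, 4, 5}, {0, 3, 4, 6}}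

lemma wf_core (c : ℝ) (P : Set (Fin 7) → ℝ) (h1 : P Set.univ = 1)
    (hadd : ∀ X Y : Set (Fin 7), X ∩ Y = ∅ → P (X ∪ Y) = P X + P Y)
    (hX : ∀ X ∈ calX, c < P X) (hY : ∀ Y ∈ calY, P Y ≤ c) : False := by
  have ins : ∀ (a : Fin 7) (S : Set (Fin 7)), a ∉ S → P (insert a S) = P {a} + P S := by
    intro a S h
    rw [Set.insert_eq]
    exact hadd _ _ (by simpa using h)
  have p3 : ∀ a b d : Fin 7, a ≠ b → a ≠ d → b ≠ d →
      P {a, b, d} = P {a} + (P {b} + P {d}) := by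
    intro a b d h1 h2 h3
    rw [ins a _ (by simp [*]), ins b _ (by simp [*])]
  have p4 : ∀ a b d e : Fin 7, a ≠ b → a ≠ d → a ≠ e → b ≠ d → b ≠ e → d ≠ e →
      P {a, b, d, e} = P {a} + (P {b} + (P {d} + P {e})) := by
    intro a b d e h1 h2 h3 h4 h5 h6
    rw [ins a _ (by simp [*]), p3 b d e h4 h5 h6]
  have hu : (Set.univ : Set (Fin 7)) = {0, 1, 2} ∪ {3, 4, 5, 6} := by
    ext x; fin_cases x <;> simp
  have hd : ({0, 1, 2} : Set (Fin 7)) ∩ {3, 4, 5, 6} = ∅ := by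
    ext x; fin_cases x <;> simp
  rw [hu, hadd _ _ hd, p3 _ _ _ (by decide) (by decide) (by decide),
    p4 _ _ _ _ (by decide) (by decide) (by decide) (by decide) (by decide) (by decide)] at h1
  simp only [calX, calY, Set.mem_insert_iff, Set.mem_singleton_iff, forall_eq_or_imp,
    forall_eq] at hX hY
  obtain ⟨x1, x2, x3, x4, x5, x6, x7⟩ := hX
  obtain ⟨y1, y2, y3, y4, y5, y6, y7⟩ := hY
  rw [p3 _ _ _ (by decide) (by decide) (by decide)] at x1 x2 x3 x4 x5 x6 x7
  rw [p4 _ _ _ _ (by decide) (by decide) (by decide) (by decide) (by decide) (by decide)]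
    at y1 y2 y3 y4 y5 y6 y7
  linarith

lemma wf_not_sub : ∀ Y ∈ calY, ∀ X ∈ calX, ¬ X ⊆ Y := by
  simp only [calX, calY, Set.mem_insert_iff, Set.mem_singleton_iff, forall_eq_or_imp,
    forall_eq]
  simp [Set.insert_subset_iff]

/-- Walley–Fine: no finitely additive probability measure on `𝒫(W)` gives every member
of `𝒳` probability `> c` and every member of `𝒴` probability `≤ c`; consequently the
epistemic neighborhood model with `R = W × W`, `V w = {w}` and `N w = 𝒩` has no
agreeing probability measure for any threshold `c ∈ (0,1) ∩ ℚ`. -/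
theorem walley_fine :
    (∀ c : ℝ, c ∈ Set.Ioo (0 : ℝ) 1 →
      ¬ ∃ P : Set (Fin 7) → ℝ,
        (∀ X : Set (Fin 7), 0 ≤ P X) ∧ (∀ X : Set (Fin 7), P X ≤ 1) ∧
        P Set.univ = 1 ∧
        (∀ X Y : Set (Fin 7), X ∩ Y = ∅ → P (X ∪ Y) = P X + P Y) ∧
        (∀ X ∈ calX, c < P X) ∧ (∀ Y ∈ calY, P Y ≤ c)) ∧
    (∀ c : ℚ, 0 < c → c < 1 →
      ∀ M : ENM (Fin 7) (Fin 7),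
        M.R = (fun _ _ => True) →
        M.V = (fun w => {w}) →
        M.N = (fun _ => {X' : Set (Fin 7) | ∃ X ∈ calX, X ⊆ X'}) →
        ¬ ∃ P : Set (Fin 7) → ℝ,
          (∀ X : Set (Fin 7), 0 ≤ P X) ∧ (∀ X : Set (Fin 7), P X ≤ 1) ∧
          P Set.univ = 1 ∧
          (∀ X Y : Set (Fin 7), X ∩ Y = ∅ → P (X ∪ Y) = P X + P Y) ∧
          (∀ w : Fin 7, 0 < P {w}) ∧
          (∀ (w : Fin 7) (X : Set (Fin 7)), X ⊆ M.cl w →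
            (X ∈ M.N w ↔ (c : ℝ) < P (X ∩ M.cl w) / P (M.cl w)))) := by
  refine ⟨?_, ?_⟩
  · rintro c - ⟨P, -, -, h1, hadd, hX, hY⟩
    exact wf_core c P h1 hadd hX hY
  · rintro c - - M hR - hN ⟨P, -, -, h1, hadd, -, h⟩
    have hcl : M.cl 0 = Set.univ := by simp [ENM.cl, hR]
    have h' : ∀ X : Set (Fin 7), (∃ Z ∈ calX, Z ⊆ X) ↔ (c : ℝ) < P X := by
      intro X
      have := h 0 X (by simp [hcl])
      simpa [hcl, hN, h1] using this
    refine wf_core c P h1 hadd (fun X hX => (h' X).1 ⟨X, hX, subset_rfl⟩) (fun Y hY => ?_)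
    by_contra hc
    obtain ⟨X, hX, hs⟩ := (h' Y).2 (not_le.1 hc)
    exact wf_not_sub Y hY X hX hs
end

section
/- Let c ∈ (0,1) ∩ ℚ and let M = (W,R,V,P) be an epistemic probability model. Define N^c(w) := {X ⊆ [w] : P_w(X) > c} for each w ∈ W. Then (W,R,V,N^c) is an epistemic neighborhood model; that is, N^c satisfies (kbc), (kbf), (n), (a), and (kbm). -/
open Classical

/-- For `c ∈ (0,1) ∩ ℚ`, the neighborhood function `N^c(w) = {X ⊆ [w] : P_w(X) > c}`
derived from an epistemic probability model yields an epistemic neighborhood model. -/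
theorem derived_neighborhood_model {W A : Type} (c : ℚ) (hc0 : 0 < c) (hc1 : c < 1)
    (M : EPM W A) :
    ∃ M' : ENM W A, M'.R = M.R ∧ M'.V = M.V ∧
      ∀ w : W, M'.N w = {X : Set W | X ⊆ M.cl w ∧ (c : ℝ) < M.Pw w X} := by
  have mono : ∀ X Y : Set W, X ⊆ Y → M.P X ≤ M.P Y := by
    intro X Y h
    have h1 := M.add X (Y \ X) (Set.inter_diff_self X Y)
    rw [Set.union_diff_cancel h] at h1
    linarith [M.nonneg (Y \ X)]
  have empty : M.P ∅ = 0 := by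
    have h := M.add ∅ ∅ (Set.inter_self ∅)
    rw [Set.union_self] at h
    linarith
  have pos : ∀ w, 0 < M.P (M.cl w) := fun w =>
    lt_of_lt_of_le (M.full w)
      (mono _ _ (Set.singleton_subset_iff.mpr (M.equiv.refl w)))
  have hc0' : (0 : ℝ) < (c : ℝ) := by exact_mod_cast hc0
  have hc1' : (c : ℝ) < 1 := by exact_mod_cast hc1
  refine ⟨{ finite := M.finite, nonempty := M.nonempty, R := M.R, equiv := M.equiv, V := M.V,
            N := fun w => {X : Set W | X ⊆ M.cl w ∧ (c : ℝ) < M.Pw w X}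
            kbc := fun w X hX => hX.1
            kbf := ?_, contains_class := ?_, agreeN := ?_, kbm := ?_ }, rfl, rfl, fun _ => rfl⟩
  · rintro w ⟨_, h⟩
    rw [EPM.Pw, Set.empty_inter, empty, zero_div] at h
    linarith
  · intro w
    refine ⟨subset_rfl, ?_⟩
    change (c : ℝ) < M.Pw w (M.cl w)
    rw [EPM.Pw, Set.inter_self, div_self (pos w).ne']
    exact hc1'
  · intro w v h
    have e : M.cl v = M.cl w := by
      ext u
      exact ⟨fun hu => M.equiv.trans h hu, fun hu => M.equiv.trans (M.equiv.symm h) hu⟩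
    simp only [EPM.Pw, e]
  · rintro w X ⟨_, h2⟩ Y hXY hY
    refine ⟨hY, lt_of_lt_of_le h2 ?_⟩
    exact div_le_div_of_nonneg_right (mono _ _ (Set.inter_subset_inter_left _ hXY)) (pos w).le
end

section
/- In the calculus KB the following are derivable for all formulas φ, ψ of L_KB: (1) Kφ → Bφ; (2) B(φ∧ψ) → (Bφ ∧ Bψ); (3) (Kφ ∧ Bψ) → B(φ∧ψ); (4) K(φ→ψ) → (¬B¬φ → ¬B¬ψ); (5) Bφ → BBφ; (6) ¬Bφ → B¬Bφ; (7) Bφ ↔ KBφ; (8) ¬Bφ ↔ K¬Bφ. Moreover, if KB ⊢ φ then KB ⊢ Bφ, and if KB ⊢ φ → ψ then KB ⊢ Bφ → Bψ, and if KB ⊢ φ → ⊥ then KB ⊢ ¬Bφ. -/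
open Classical

/-- The language `L_KB`: `φ ::= ⊤ | p | ¬φ | φ∧φ | Kφ | Bφ`. -/
inductive Form (A : Type) : Type where
  | top : Form A
  | atom : A → Form A
  | neg : Form A → Form A
  | and : Form A → Form A → Form A
  | K : Form A → Form A
  | B : Form A → Form A

namespace Form

/-- Material implication abbreviation. -/
def imp {A : Type} (φ ψ : Form A) : Form A := Form.neg (Form.and φ (Form.neg ψ))

/-- Disjunction abbreviation. -/
def or {A : Type} (φ ψ : Form A) : Form A := Form.neg (Form.and (Form.neg φ) (Form.neg ψ))

/-- Falsehood `⊥ := ¬⊤`. -/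
def bot {A : Type} : Form A := Form.neg Form.top

/-- Biconditional abbreviation. -/
def iff {A : Type} (φ ψ : Form A) : Form A := Form.and (Form.imp φ ψ) (Form.imp ψ φ)

end Form

/-- Boolean evaluation of a formula under a valuation of "atomic" formulas
(propositional letters and formulas of the form `Kφ` or `Bφ`). -/
def evalb {A : Type} (v : Form A → Bool) : Form A → Bool
  | Form.top => true
  | Form.atom p => v (Form.atom p)
  | Form.neg φ => !(evalb v φ)
  | Form.and φ ψ => evalb v φ && evalb v ψ
  | Form.K φ => v (Form.K φ)
  | Form.B φ => v (Form.B φ)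

/-- `φ` is a propositional tautology (treating `Kψ` and `Bψ` as atoms). -/
def Taut {A : Type} (φ : Form A) : Prop := ∀ v : Form A → Bool, evalb v φ = true

/-- The Hilbert calculus `KB`. -/
inductive KB {A : Type} : Form A → Prop where
  | taut {φ : Form A} : Taut φ → KB φ
  | kdist (φ ψ : Form A) :
      KB (Form.imp (Form.K (Form.imp φ ψ)) (Form.imp (Form.K φ) (Form.K ψ)))
  | kt (φ : Form A) : KB (Form.imp (Form.K φ) φ)
  | k4 (φ : Form A) : KB (Form.imp (Form.K φ) (Form.K (Form.K φ)))
  | k5 (φ : Form A) : KB (Form.imp (Form.neg (Form.K φ)) (Form.K (Form.neg (Form.K φ))))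
  | bf : KB (Form.neg (Form.B (Form.bot)))
  | bn : KB (Form.B Form.top)
  | ap (φ : Form A) : KB (Form.imp (Form.B φ) (Form.K (Form.B φ)))
  | an (φ : Form A) : KB (Form.imp (Form.neg (Form.B φ)) (Form.K (Form.neg (Form.B φ))))
  | kbm (φ ψ : Form A) :
      KB (Form.imp (Form.K (Form.imp φ ψ)) (Form.imp (Form.B φ) (Form.B ψ)))
  | mp {φ ψ : Form A} : KB (Form.imp φ ψ) → KB φ → KB ψ
  | nec {φ : Form A} : KB φ → KB (Form.K φ)

/-- Consequences of one premise. -/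
theorem KB.cons1 {A : Type} {a b : Form A} (ha : KB a)
    (h : ∀ v : Form A → Bool, evalb v a = true → evalb v b = true) : KB b := by
  refine KB.mp (KB.taut ?_) ha
  intro v
  have := h v
  simp only [Form.imp, evalb]
  cases h1 : evalb v a <;> cases h2 : evalb v b <;> simp_all

/-- Consequences of two premises. -/
theorem KB.cons2 {A : Type} {a b c : Form A} (ha : KB a) (hb : KB b)
    (h : ∀ v : Form A → Bool, evalb v a = true → evalb v b = true → evalb v c = true) :
    KB c := by
  refine KB.mp (KB.cons1 (b := Form.imp b c) ha ?_) hb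
  intro v hv
  have := h v hv
  simp only [Form.imp, evalb]
  cases h1 : evalb v b <;> cases h2 : evalb v c <;> simp_all

theorem KB.trans {A : Type} {a b c : Form A} (h1 : KB (Form.imp a b))
    (h2 : KB (Form.imp b c)) : KB (Form.imp a c) := by
  refine KB.cons2 h1 h2 ?_
  intro v
  simp only [Form.imp, evalb]
  cases evalb v a <;> cases evalb v b <;> cases evalb v c <;> simp

theorem KB.kmono {A : Type} {a b : Form A} (h : ∀ v : Form A → Bool,
    evalb v (Form.imp a b) = true) : KB (Form.imp (Form.K a) (Form.K b)) :=
  KB.mp (KB.kdist a b) (KB.nec (KB.taut h))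

theorem KB.bmono {A : Type} {a b : Form A} (h : KB (Form.imp a b)) :
    KB (Form.imp (Form.B a) (Form.B b)) :=
  KB.mp (KB.kbm a b) (KB.nec h)

theorem KB.kb {A : Type} (a : Form A) : KB (Form.imp (Form.K a) (Form.B a)) := by
  have h1 : KB (Form.imp (Form.K a) (Form.K (Form.imp Form.top a))) := by
    apply KB.kmono
    intro v
    simp only [Form.imp, evalb]
    cases evalb v a <;> simp
  refine KB.cons2 (KB.trans h1 (KB.kbm Form.top a)) KB.bn ?_
  intro v
  simp only [Form.imp, evalb]
  grind

/-- The `KB` derivables of Theorem "KB Derivables". -/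
theorem KB_derivables {A : Type} :
    (∀ φ ψ : Form A,
      KB (Form.imp (Form.K φ) (Form.B φ)) ∧
      KB (Form.imp (Form.B (Form.and φ ψ)) (Form.and (Form.B φ) (Form.B ψ))) ∧
      KB (Form.imp (Form.and (Form.K φ) (Form.B ψ)) (Form.B (Form.and φ ψ))) ∧
      KB (Form.imp (Form.K (Form.imp φ ψ))
            (Form.imp (Form.neg (Form.B (Form.neg φ))) (Form.neg (Form.B (Form.neg ψ))))) ∧
      KB (Form.imp (Form.B φ) (Form.B (Form.B φ))) ∧
      KB (Form.imp (Form.neg (Form.B φ)) (Form.B (Form.neg (Form.B φ)))) ∧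
      KB (Form.iff (Form.B φ) (Form.K (Form.B φ))) ∧
      KB (Form.iff (Form.neg (Form.B φ)) (Form.K (Form.neg (Form.B φ))))) ∧
    (∀ φ : Form A, KB φ → KB (Form.B φ)) ∧
    (∀ φ ψ : Form A, KB (Form.imp φ ψ) → KB (Form.imp (Form.B φ) (Form.B ψ))) ∧
    (∀ φ : Form A, KB (Form.imp φ Form.bot) → KB (Form.neg (Form.B φ))) := by
  refine ⟨fun φ ψ => ⟨KB.kb φ, ?_, ?_, ?_, (KB.ap φ).trans (KB.kb _),
    (KB.an φ).trans (KB.kb _), ?_, ?_⟩, fun φ h => KB.mp (KB.kb φ) (KB.nec h),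
    fun φ ψ h => KB.bmono h, ?_⟩
  · have h1 : KB (Form.imp (Form.B (Form.and φ ψ)) (Form.B φ)) := by
      refine KB.bmono (KB.taut fun v => ?_)
      simp only [Form.imp, evalb]
      cases evalb v φ <;> cases evalb v ψ <;> rfl
    have h2 : KB (Form.imp (Form.B (Form.and φ ψ)) (Form.B ψ)) := by
      refine KB.bmono (KB.taut fun v => ?_)
      simp only [Form.imp, evalb]
      cases evalb v φ <;> cases evalb v ψ <;> rfl
    refine KB.cons2 h1 h2 fun v => ?_
    simp only [Form.imp, evalb]
    grind
  · have h1 : KB (Form.imp (Form.K φ) (Form.K (Form.imp ψ (Form.and φ ψ)))) := by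
      refine KB.kmono fun v => ?_
      simp only [Form.imp, evalb]
      cases evalb v φ <;> cases evalb v ψ <;> rfl
    refine KB.cons1 (h1.trans (KB.kbm _ _)) fun v => ?_
    simp only [Form.imp, evalb]
    grind
  · have h1 : KB (Form.imp (Form.K (Form.imp φ ψ))
        (Form.K (Form.imp (Form.neg ψ) (Form.neg φ)))) := by
      refine KB.kmono fun v => ?_
      simp only [Form.imp, evalb]
      cases evalb v φ <;> cases evalb v ψ <;> rfl
    refine KB.cons1 (h1.trans (KB.kbm _ _)) fun v => ?_
    simp only [Form.imp, evalb]
    grind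
  · refine KB.cons2 (KB.ap φ) (KB.kt (Form.B φ)) fun v => ?_
    simp only [Form.iff, Form.imp, evalb]
    grind
  · refine KB.cons2 (KB.an φ) (KB.kt (Form.neg (Form.B φ))) fun v => ?_
    simp only [Form.iff, Form.imp, evalb]
    grind
  · intro φ h
    refine KB.cons2 (KB.bmono h) KB.bf fun v => ?_
    simp only [Form.imp, evalb]
    grind
end

section
/- The calculus KB is sound and complete with respect to the class of epistemic neighborhood models: for every formula φ of L_KB, KB ⊢ φ if and only if M,w ⊨ φ for every epistemic neighborhood model M and every world w of M. -/
open Classical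

/-- Truth set of a formula in an epistemic neighborhood model. -/
def nsem {W A : Type} (M : ENM W A) : Form A → Set W
  | Form.top => Set.univ
  | Form.atom p => {w | p ∈ M.V w}
  | Form.neg φ => (nsem M φ)ᶜ
  | Form.and φ ψ => nsem M φ ∩ nsem M ψ
  | Form.K φ => {w | M.cl w ⊆ nsem M φ}
  | Form.B φ => {w | M.cl w ∩ nsem M φ ∈ M.N w}

namespace KBProof

variable {A : Type}

theorem evalb_sem {W : Type} (M : ENM W A) (w : W) (φ : Form A) :
    evalb (fun χ => decide (w ∈ nsem M χ)) φ = decide (w ∈ nsem M φ) := by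
  induction φ with
  | top => simp [evalb, nsem]
  | atom p => simp [evalb]
  | neg φ ih => simp [evalb, nsem, ih]
  | and φ ψ ih1 ih2 => simp [evalb, nsem, ih1, ih2]
  | K φ ih => simp [evalb]
  | B φ ih => simp [evalb]

theorem mem_imp {W : Type} (M : ENM W A) (w : W) (φ ψ : Form A) :
    w ∈ nsem M (Form.imp φ ψ) ↔ (w ∈ nsem M φ → w ∈ nsem M ψ) := by
  simp [Form.imp, nsem]

theorem mem_neg {W : Type} (M : ENM W A) (w : W) (φ : Form A) :
    w ∈ nsem M (Form.neg φ) ↔ ¬ w ∈ nsem M φ := by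
  simp [nsem]

theorem mem_K {W : Type} (M : ENM W A) (w : W) (φ : Form A) :
    w ∈ nsem M (Form.K φ) ↔ ∀ v, M.R w v → v ∈ nsem M φ := Iff.rfl

theorem mem_B {W : Type} (M : ENM W A) (w : W) (φ : Form A) :
    w ∈ nsem M (Form.B φ) ↔ M.cl w ∩ nsem M φ ∈ M.N w := Iff.rfl

theorem cl_eq {W : Type} (M : ENM W A) {w v : W} (h : M.R w v) : M.cl v = M.cl w := by
  ext u
  exact ⟨fun hu => M.equiv.trans h hu, fun hu => M.equiv.trans (M.equiv.symm h) hu⟩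

theorem B_congr {W : Type} (M : ENM W A) {w v : W} (h : M.R w v) (φ : Form A) :
    v ∈ nsem M (Form.B φ) ↔ w ∈ nsem M (Form.B φ) := by
  rw [mem_B, mem_B, cl_eq M h, M.agreeN w v h]

theorem soundness {φ : Form A} (h : KB φ) {W : Type} (M : ENM W A) :
    ∀ w, w ∈ nsem M φ := by
  induction h with
  | taut h =>
    intro w
    have := h (fun χ => decide (w ∈ nsem M χ))
    rw [evalb_sem] at this
    simpa using this
  | kdist φ ψ =>
    intro w
    simp only [mem_imp, mem_K]
    intro h1 h2 v hv
    exact h1 v hv (h2 v hv)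
  | kt φ =>
    intro w
    simp only [mem_imp, mem_K]
    intro h1
    exact h1 w (M.equiv.refl w)
  | k4 φ =>
    intro w
    simp only [mem_imp, mem_K]
    intro h1 v hv u hu
    exact h1 u (M.equiv.trans hv hu)
  | k5 φ =>
    intro w
    simp only [mem_imp, mem_K, mem_neg]
    intro h1 v hv h2
    exact h1 fun u hu => h2 u (M.equiv.trans (M.equiv.symm hv) hu)
  | bf =>
    intro w
    rw [mem_neg, mem_B]
    have : M.cl w ∩ nsem M Form.bot = ∅ := by simp [Form.bot, nsem]
    rw [this]
    exact M.kbf w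
  | bn =>
    intro w
    rw [mem_B]
    have : M.cl w ∩ nsem M Form.top = M.cl w := by simp [nsem]
    rw [this]
    exact M.contains_class w
  | ap φ =>
    intro w
    rw [mem_imp, mem_K]
    intro h v hv
    exact (B_congr M hv φ).2 h
  | an φ =>
    intro w
    rw [mem_imp, mem_K]
    intro h v hv
    rw [mem_neg] at h ⊢
    rwa [B_congr M hv φ]
  | kbm φ ψ =>
    intro w
    rw [mem_imp, mem_imp, mem_K, mem_B, mem_B]
    intro h1 h2
    refine M.kbm w _ h2 _ ?_ Set.inter_subset_left
    rintro v ⟨hv, hv2⟩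
    exact ⟨hv, (mem_imp M v φ ψ).1 (h1 v hv) hv2⟩
  | mp _ _ ih1 ih2 =>
    intro w
    exact (mem_imp M w _ _).1 (ih1 w) (ih2 w)
  | nec _ ih =>
    intro w v _
    exact ih v

/-- Derivability from hypotheses (necessitation only for theorems). -/
inductive Prv (Γ : Set (Form A)) : Form A → Prop where
  | thm {φ : Form A} : KB φ → Prv Γ φ
  | hyp {φ : Form A} : φ ∈ Γ → Prv Γ φ
  | mp {φ ψ : Form A} : Prv Γ (Form.imp φ ψ) → Prv Γ φ → Prv Γ ψ

theorem prv_taut {Γ : Set (Form A)} {φ : Form A} (h : Taut φ) : Prv Γ φ := .thm (.taut h)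

theorem taut_k (φ ψ : Form A) : Taut (Form.imp φ (Form.imp ψ φ)) := by
  intro v; simp only [Form.imp, evalb]
  cases evalb v φ <;> cases evalb v ψ <;> rfl

theorem taut_s (φ ψ χ : Form A) : Taut (Form.imp (Form.imp φ (Form.imp ψ χ))
    (Form.imp (Form.imp φ ψ) (Form.imp φ χ))) := by
  intro v; simp only [Form.imp, evalb]
  cases evalb v φ <;> cases evalb v ψ <;> cases evalb v χ <;> rfl

theorem taut_id (φ : Form A) : Taut (Form.imp φ φ) := by
  intro v; simp only [Form.imp, evalb]
  cases evalb v φ <;> rfl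

theorem taut_cases (φ ψ : Form A) : Taut (Form.imp (Form.imp φ ψ)
    (Form.imp (Form.imp (Form.neg φ) ψ) ψ)) := by
  intro v; simp only [Form.imp, evalb]
  cases evalb v φ <;> cases evalb v ψ <;> rfl

theorem taut_efq (φ ψ : Form A) : Taut (Form.imp (Form.neg φ) (Form.imp φ ψ)) := by
  intro v; simp only [Form.imp, evalb]
  cases evalb v φ <;> cases evalb v ψ <;> rfl

theorem taut_and1 (φ ψ : Form A) : Taut (Form.imp (Form.and φ ψ) φ) := by
  intro v; simp only [Form.imp, evalb]
  cases evalb v φ <;> cases evalb v ψ <;> rfl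

theorem taut_and2 (φ ψ : Form A) : Taut (Form.imp (Form.and φ ψ) ψ) := by
  intro v; simp only [Form.imp, evalb]
  cases evalb v φ <;> cases evalb v ψ <;> rfl

theorem taut_and3 (φ ψ : Form A) : Taut (Form.imp φ (Form.imp ψ (Form.and φ ψ))) := by
  intro v; simp only [Form.imp, evalb]
  cases evalb v φ <;> cases evalb v ψ <;> rfl

theorem deduction {Γ : Set (Form A)} {χ φ : Form A} (h : Prv (insert χ Γ) φ) :
    Prv Γ (Form.imp χ φ) := by
  induction h with
  | thm h => exact .mp (prv_taut (taut_k _ _)) (.thm h)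
  | hyp h =>
    rcases h with rfl | h
    · exact prv_taut (taut_id _)
    · exact .mp (prv_taut (taut_k _ _)) (.hyp h)
  | mp _ _ ih1 ih2 => exact .mp (.mp (prv_taut (taut_s _ _ _)) ih1) ih2

theorem prv_mono {Γ Δ : Set (Form A)} (hs : Γ ⊆ Δ) {φ : Form A} (h : Prv Γ φ) : Prv Δ φ := by
  induction h with
  | thm h => exact .thm h
  | hyp h => exact .hyp (hs h)
  | mp _ _ ih1 ih2 => exact .mp ih1 ih2

theorem prv_empty {φ : Form A} (h : Prv ∅ φ) : KB φ := by
  induction h with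
  | thm h => exact h
  | hyp h => exact absurd h (Set.notMem_empty _)
  | mp _ _ ih1 ih2 => exact .mp ih1 ih2

theorem prv_chain {c : Set (Set (Form A))} (hc : IsChain (· ⊆ ·) c) (hne : c.Nonempty)
    {φ : Form A} (h : Prv (⋃₀ c) φ) : ∃ Γ ∈ c, Prv Γ φ := by
  induction h with
  | thm h => exact ⟨_, hne.some_mem, .thm h⟩
  | hyp h =>
    obtain ⟨Γ, hΓ, h⟩ := h
    exact ⟨Γ, hΓ, .hyp h⟩
  | mp _ _ ih1 ih2 =>
    obtain ⟨Γ, hΓ, h1⟩ := ih1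
    obtain ⟨Δ, hΔ, h2⟩ := ih2
    rcases hc.total hΓ hΔ with hs | hs
    · exact ⟨Δ, hΔ, .mp (prv_mono hs h1) h2⟩
    · exact ⟨Γ, hΓ, .mp h1 (prv_mono hs h2)⟩

/-- Maximal consistent sets. -/
structure MCS (Γ : Set (Form A)) : Prop where
  closed : ∀ χ, Prv Γ χ → χ ∈ Γ
  neg : ∀ χ, Form.neg χ ∈ Γ ↔ χ ∉ Γ

theorem lindenbaum {Γ : Set (Form A)} {ψ : Form A} (h : ¬ Prv Γ ψ) :
    ∃ Δ, Γ ⊆ Δ ∧ MCS Δ ∧ ψ ∉ Δ := by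
  obtain ⟨Δ, hΓΔ, hmax⟩ := zorn_subset_nonempty {Δ : Set (Form A) | ¬ Prv Δ ψ}
    (fun c hcs hc hne => ⟨⋃₀ c, fun hp => by
      obtain ⟨Θ, hΘ, hp⟩ := prv_chain hc hne hp
      exact hcs hΘ hp, fun s hs => Set.subset_sUnion_of_mem hs⟩) Γ h
  have hψ : ¬ Prv Δ ψ := hmax.prop
  have key : ∀ χ, χ ∉ Δ → Prv Δ (Form.imp χ ψ) := by
    intro χ hχ
    apply deduction
    by_contra hn
    exact hχ (hmax.le_of_ge (y := insert χ Δ) hn (Set.subset_insert _ _) (Set.mem_insert _ _))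
  refine ⟨Δ, hΓΔ, ⟨?_, ?_⟩, fun hm => hψ (.hyp hm)⟩
  · intro χ hχ
    by_contra hn
    exact hψ (.mp (key χ hn) hχ)
  · intro χ
    constructor
    · intro h1 h2
      exact hψ (.mp (.mp (prv_taut (taut_efq χ ψ)) (.hyp h1)) (.hyp h2))
    · intro h1
      by_contra h2
      exact hψ (.mp (.mp (prv_taut (taut_cases χ ψ)) (key _ h1)) (key _ h2))

namespace MCS

variable {Γ : Set (Form A)} (hΓ : MCS Γ)

theorem thm {χ : Form A} (hΓ : MCS Γ) (h : KB χ) : χ ∈ Γ := hΓ.closed _ (.thm h)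

theorem mp {χ ψ : Form A} (hΓ : MCS Γ) (h : Form.imp χ ψ ∈ Γ) (h2 : χ ∈ Γ) : ψ ∈ Γ :=
  hΓ.closed _ (.mp (.hyp h) (.hyp h2))

theorem and_iff (hΓ : MCS Γ) (χ ψ : Form A) : Form.and χ ψ ∈ Γ ↔ χ ∈ Γ ∧ ψ ∈ Γ := by
  constructor
  · intro h
    exact ⟨hΓ.mp (hΓ.thm (.taut (taut_and1 _ _))) h, hΓ.mp (hΓ.thm (.taut (taut_and2 _ _))) h⟩
  · rintro ⟨h1, h2⟩
    exact hΓ.mp (hΓ.mp (hΓ.thm (.taut (taut_and3 _ _))) h1) h2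

theorem imp_iff (hΓ : MCS Γ) (χ ψ : Form A) : Form.imp χ ψ ∈ Γ ↔ (χ ∈ Γ → ψ ∈ Γ) := by
  rw [Form.imp, hΓ.neg, hΓ.and_iff, hΓ.neg]
  tauto

theorem K_closed (hΓ : MCS Γ) {ψ : Form A} (h : Prv {θ | Form.K θ ∈ Γ} ψ) : Form.K ψ ∈ Γ := by
  induction h with
  | thm h => exact hΓ.thm (.nec h)
  | hyp h => exact h
  | mp _ _ ih1 ih2 => exact hΓ.mp (hΓ.mp (hΓ.thm (.kdist _ _)) ih1) ih2

theorem K_witness (hΓ : MCS Γ) {ψ : Form A} (h : Form.K ψ ∉ Γ) :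
    ∃ Δ, MCS Δ ∧ ψ ∉ Δ ∧ (∀ θ, Form.K θ ∈ Δ ↔ Form.K θ ∈ Γ) ∧
      (∀ θ, Form.B θ ∈ Δ ↔ Form.B θ ∈ Γ) := by
  obtain ⟨Δ, hs, hΔ, hψ⟩ := lindenbaum (fun hp => h (hΓ.K_closed hp))
  refine ⟨Δ, hΔ, hψ, fun θ => ⟨fun h1 => ?_, fun h1 => ?_⟩, fun θ => ⟨fun h1 => ?_, fun h1 => ?_⟩⟩
  · by_contra h2
    have : Form.neg (Form.K θ) ∈ Δ := hs (hΓ.mp (hΓ.thm (.k5 θ)) ((hΓ.neg _).2 h2))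
    exact (hΔ.neg _).1 this h1
  · exact hs (hΓ.mp (hΓ.thm (.k4 θ)) h1)
  · by_contra h2
    have : Form.neg (Form.B θ) ∈ Δ := hs (hΓ.mp (hΓ.thm (.an θ)) ((hΓ.neg _).2 h2))
    exact (hΔ.neg _).1 this h1
  · exact hs (hΓ.mp (hΓ.thm (.ap θ)) h1)

end MCS

/-- Subformulas. -/
def sub : Form A → Set (Form A)
  | Form.top => {Form.top}
  | Form.atom p => {Form.atom p}
  | Form.neg φ => insert (Form.neg φ) (sub φ)
  | Form.and φ ψ => insert (Form.and φ ψ) (sub φ ∪ sub ψ)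
  | Form.K φ => insert (Form.K φ) (sub φ)
  | Form.B φ => insert (Form.B φ) (sub φ)

theorem sub_finite (φ : Form A) : (sub φ).Finite := by
  induction φ with
  | top => exact Set.finite_singleton _
  | atom p => exact Set.finite_singleton _
  | neg φ ih => exact ih.insert _
  | and φ ψ ih1 ih2 => exact (ih1.union ih2).insert _
  | K φ ih => exact ih.insert _
  | B φ ih => exact ih.insert _

theorem self_mem_sub (φ : Form A) : φ ∈ sub φ := by
  cases φ <;> simp [sub]

theorem sub_trans {φ ψ : Form A} (h : ψ ∈ sub φ) : sub ψ ⊆ sub φ := by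
  induction φ with
  | top => rw [show ψ = Form.top from h]
  | atom p => rw [show ψ = Form.atom p from h]
  | neg φ ih =>
    rcases h with rfl | h
    · exact le_rfl
    · exact (ih h).trans (Set.subset_insert _ _)
  | and φ χ ih1 ih2 =>
    rcases h with rfl | h | h
    · exact le_rfl
    · exact ((ih1 h).trans Set.subset_union_left).trans (Set.subset_insert _ _)
    · exact ((ih2 h).trans Set.subset_union_right).trans (Set.subset_insert _ _)
  | K φ ih =>
    rcases h with rfl | h
    · exact le_rfl
    · exact (ih h).trans (Set.subset_insert _ _)
  | B φ ih =>
    rcases h with rfl | h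
    · exact le_rfl
    · exact (ih h).trans (Set.subset_insert _ _)

section Model

variable (S : Set (Form A))

/-- Worlds: traces on `S` of maximal consistent sets. -/
def World : Type := {s : Set S // ∃ Γ, MCS Γ ∧ s = {x : S | x.1 ∈ Γ}}

/-- A chosen maximal consistent set representing a world. -/
noncomputable def rep (w : World S) : Set (Form A) := w.2.choose

theorem rep_mcs (w : World S) : MCS (rep S w) := w.2.choose_spec.1

theorem exists_world {Δ : Set (Form A)} (hΔ : MCS Δ) :
    ∃ v : World S, ∀ χ ∈ S, χ ∈ rep S v ↔ χ ∈ Δ := by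
  let v : World S := ⟨{x : S | x.1 ∈ Δ}, Δ, hΔ, rfl⟩
  refine ⟨v, fun χ hχ => ?_⟩
  have := v.2.choose_spec.2
  have h2 := congrArg (fun s : Set S => (⟨χ, hχ⟩ : S) ∈ s) this
  exact (Iff.of_eq h2).symm

/-- Accessibility: agreement on modal formulas of `S`. -/
def Rel (w v : World S) : Prop :=
  (∀ θ, Form.K θ ∈ S → (Form.K θ ∈ rep S v ↔ Form.K θ ∈ rep S w)) ∧
  (∀ θ, Form.B θ ∈ S → (Form.B θ ∈ rep S v ↔ Form.B θ ∈ rep S w))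

theorem rel_equiv : Equivalence (Rel S) where
  refl w := ⟨fun _ _ => Iff.rfl, fun _ _ => Iff.rfl⟩
  symm h := ⟨fun θ hθ => (h.1 θ hθ).symm, fun θ hθ => (h.2 θ hθ).symm⟩
  trans h1 h2 := ⟨fun θ hθ => (h2.1 θ hθ).trans (h1.1 θ hθ),
    fun θ hθ => (h2.2 θ hθ).trans (h1.2 θ hθ)⟩

theorem world_witness (w : World S) {χ : Form A} (h : Form.K χ ∉ rep S w) :
    ∃ v, Rel S w v ∧ ∃ Δ, MCS Δ ∧ χ ∉ Δ ∧ ∀ θ ∈ S, θ ∈ rep S v ↔ θ ∈ Δ := by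
  obtain ⟨Δ, hΔ, hχ, hK, hB⟩ := (rep_mcs S w).K_witness h
  obtain ⟨v, hv⟩ := exists_world S hΔ
  exact ⟨v, ⟨fun θ hθ => (hv _ hθ).trans (hK θ), fun θ hθ => (hv _ hθ).trans (hB θ)⟩,
    Δ, hΔ, hχ, hv⟩

/-- Neighborhoods. -/
def Nbh (w : World S) : Set (Set (World S)) :=
  {X | X ⊆ {v | Rel S w v} ∧ ∃ χ, Form.B χ ∈ S ∧ Form.B χ ∈ rep S w ∧
    ∀ v, Rel S w v → χ ∈ rep S v → v ∈ X}

theorem nbh_sub {w v : World S} (h : Rel S w v) : Nbh S w ⊆ Nbh S v := by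
  rintro X ⟨h1, χ, h2, h3, h4⟩
  exact ⟨fun u hu => (rel_equiv S).trans ((rel_equiv S).symm h) (h1 hu), χ, h2, (h.2 χ h2).2 h3,
    fun u hu => h4 u ((rel_equiv S).trans h hu)⟩

theorem B_of_nbh (hSB : ∀ χ, Form.B χ ∈ S → χ ∈ S) (w : World S) {χ ψ : Form A}
    (h1 : Form.B χ ∈ S) (h2 : Form.B χ ∈ rep S w)
    (hψ : ∀ v Δ, Rel S w v → χ ∈ rep S v → MCS Δ → (∀ θ ∈ S, θ ∈ rep S v ↔ θ ∈ Δ) → ψ ∈ Δ) :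
    Form.B ψ ∈ rep S w := by
  have hK : Form.K (Form.imp χ ψ) ∈ rep S w := by
    by_contra hn
    obtain ⟨v, hv, Δ, hΔ, h3, h4⟩ := world_witness S w hn
    rw [hΔ.imp_iff] at h3
    exact h3 fun h5 => hψ v Δ hv ((h4 χ (hSB χ h1)).2 h5) hΔ h4
  have hw := rep_mcs S w
  exact hw.mp (hw.mp (hw.thm (.kbm χ ψ)) hK) h2

/-- The finite canonical model. -/
noncomputable def canon (hfin : S.Finite) (hSB : ∀ χ, Form.B χ ∈ S → χ ∈ S)
    (hBT : Form.B Form.top ∈ S) (hne : Nonempty (World S)) : ENM (World S) A where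
  finite := by
    have : Finite S := hfin
    unfold World
    infer_instance
  nonempty := hne
  R := Rel S
  equiv := rel_equiv S
  V w := {p | Form.atom p ∈ rep S w}
  N := Nbh S
  kbc w X hX := hX.1
  kbf w hX := by
    obtain ⟨-, χ, h1, h2, h3⟩ := hX
    have := B_of_nbh S hSB w (ψ := Form.bot) h1 h2 (fun v Δ hv hχ _ _ => (h3 v hv hχ).elim)
    exact ((rep_mcs S w).neg _).1 ((rep_mcs S w).thm .bf) this
  contains_class w := ⟨le_rfl, Form.top, hBT, (rep_mcs S w).thm .bn, fun v hv _ => hv⟩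
  agreeN w v h := Set.Subset.antisymm (nbh_sub S ((rel_equiv S).symm h)) (nbh_sub S h)
  kbm w X hX Y hXY hY := by
    obtain ⟨-, χ, h1, h2, h3⟩ := hX
    exact ⟨hY, χ, h1, h2, fun v hv hχ => hXY (h3 v hv hχ)⟩

theorem truth (hfin : S.Finite) (hsub : ∀ χ ∈ S, sub χ ⊆ S) (hSB : ∀ χ, Form.B χ ∈ S → χ ∈ S)
    (hBT : Form.B Form.top ∈ S) (hne : Nonempty (World S)) (ψ : Form A) :
    ψ ∈ S → ∀ w, w ∈ nsem (canon S hfin hSB hBT hne) ψ ↔ ψ ∈ rep S w := by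
  induction ψ with
  | top => exact fun _ w => ⟨fun _ => (rep_mcs S w).thm (.taut fun _ => rfl), fun _ => trivial⟩
  | atom p => exact fun _ w => Iff.rfl
  | neg ψ ih =>
    intro hS w
    have hψ : ψ ∈ S := hsub _ hS (Or.inr (self_mem_sub ψ))
    rw [mem_neg, ih hψ, (rep_mcs S w).neg]
  | and ψ χ ih1 ih2 =>
    intro hS w
    have hψ : ψ ∈ S := hsub _ hS (Or.inr (Or.inl (self_mem_sub ψ)))
    have hχ : χ ∈ S := hsub _ hS (Or.inr (Or.inr (self_mem_sub χ)))
    rw [(rep_mcs S w).and_iff, ← ih1 hψ, ← ih2 hχ]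
    rfl
  | K ψ ih =>
    intro hS w
    have hψ : ψ ∈ S := hsub _ hS (Or.inr (self_mem_sub ψ))
    rw [mem_K]
    constructor
    · intro h
      by_contra hn
      obtain ⟨v, hv, Δ, hΔ, h3, h4⟩ := world_witness S w hn
      exact h3 ((h4 ψ hψ).1 ((ih hψ v).1 (h v hv)))
    · intro h v hv
      rw [ih hψ]
      have hv' : Rel S w v := hv
      exact (rep_mcs S v).mp ((rep_mcs S v).thm (.kt ψ)) ((hv'.1 ψ hS).2 h)
  | B ψ ih =>
    intro hS w
    have hψ : ψ ∈ S := hSB _ hS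
    rw [mem_B]
    constructor
    · rintro ⟨-, χ, h1, h2, h3⟩
      refine B_of_nbh S hSB w h1 h2 fun v Δ hv hχ hΔ h4 => ?_
      exact (h4 ψ hψ).1 ((ih hψ v).1 (h3 v hv hχ).2)
    · intro h
      exact ⟨Set.inter_subset_left, ψ, hS, h, fun v hv hχ => ⟨hv, (ih hψ v).2 hχ⟩⟩

end Model

theorem completeness (φ : Form A)
    (h : ∀ (W : Type) (M : ENM W A) (w : W), w ∈ nsem M φ) : KB φ := by
  by_contra hn
  obtain ⟨Δ, -, hΔ, hφ⟩ := lindenbaum (Γ := ∅) (fun hp => hn (prv_empty hp))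
  let S : Set (Form A) := sub (Form.and φ (Form.B Form.top))
  have hsub : ∀ χ ∈ S, sub χ ⊆ S := fun χ hχ => sub_trans hχ
  have hSB : ∀ χ, Form.B χ ∈ S → χ ∈ S := fun χ hχ => hsub _ hχ (Or.inr (self_mem_sub χ))
  have hφS : φ ∈ S := Or.inr (Or.inl (self_mem_sub φ))
  have hBT : Form.B Form.top ∈ S := Or.inr (Or.inr (self_mem_sub _))
  obtain ⟨w, hw⟩ := exists_world S hΔ
  have := (truth S (sub_finite _) hsub hSB hBT ⟨w⟩ φ hφS w).1 (h _ _ _)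
  exact hφ ((hw φ hφS).1 this)

end KBProof

/-- `KB` is sound and complete with respect to the class of epistemic neighborhood
models. -/
theorem KB_neighborhood_soundness_completeness {A : Type} (φ : Form A) :
    KB φ ↔ ∀ (W : Type) (M : ENM W A) (w : W), w ∈ nsem M φ := by
  exact ⟨fun h W M w => KBProof.soundness h M w, KBProof.completeness φ⟩
end

section
/- The calculus KB is sound for every threshold with respect to epistemic probability models: for every c ∈ (0,1) ∩ ℚ and every formula φ of L_KB, if KB ⊢ φ then M,w ⊨ φ in the probability semantics with threshold c, for every epistemic probability model M and every world w of M. -/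
open Classical

/-- Truth set of a formula in an epistemic probability model, for threshold `c`:
`Kφ` holds at `w` iff `P_w(⟦φ⟧) = 1`, and `Bφ` holds at `w` iff `P_w(⟦φ⟧) > c`. -/
noncomputable def psem {W A : Type} (c : ℝ) (M : EPM W A) : Form A → Set W
  | Form.top => Set.univ
  | Form.atom p => {w | p ∈ M.V w}
  | Form.neg φ => (psem c M φ)ᶜ
  | Form.and φ ψ => psem c M φ ∩ psem c M ψ
  | Form.K φ => {w | M.Pw w (psem c M φ) = 1}
  | Form.B φ => {w | c < M.Pw w (psem c M φ)}

theorem EPM.P_mono {W A : Type} (M : EPM W A) {X Y : Set W} (h : X ⊆ Y) : M.P X ≤ M.P Y := by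
  have h1 := M.add X (Y \ X) (by ext; simp)
  rw [Set.union_sdiff_cancel h] at h1
  have := M.nonneg (Y \ X)
  linarith

theorem EPM.P_empty {W A : Type} (M : EPM W A) : M.P ∅ = 0 := by
  have h1 := M.add ∅ ∅ (by simp)
  simp at h1
  exact h1

theorem EPM.mem_cl {W A : Type} (M : EPM W A) (w : W) : w ∈ M.cl w := M.equiv.refl w

theorem EPM.cl_pos {W A : Type} (M : EPM W A) (w : W) : 0 < M.P (M.cl w) :=
  lt_of_lt_of_le (M.full w) (M.P_mono (Set.singleton_subset_iff.2 (M.mem_cl w)))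

theorem EPM.cl_eq {W A : Type} (M : EPM W A) {w v : W} (h : v ∈ M.cl w) : M.cl v = M.cl w := by
  ext u
  exact ⟨fun hu => M.equiv.trans h hu, fun hu => M.equiv.trans (M.equiv.symm h) hu⟩

theorem EPM.Pw_eq {W A : Type} (M : EPM W A) {w v : W} (h : v ∈ M.cl w) (X : Set W) :
    M.Pw v X = M.Pw w X := by
  simp only [EPM.Pw, M.cl_eq h]

theorem EPM.Pw_one {W A : Type} (M : EPM W A) (w : W) (X : Set W) :
    M.Pw w X = 1 ↔ M.cl w ⊆ X := by
  have hp := M.cl_pos w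
  unfold EPM.Pw
  rw [div_eq_one_iff_eq hp.ne']
  constructor
  · intro h v hv
    by_contra hX
    have h1 := M.add (X ∩ M.cl w) {v} (by
      ext u
      simp only [Set.mem_inter_iff, Set.mem_singleton_iff, Set.mem_empty_iff_false, iff_false]
      rintro ⟨⟨hu, _⟩, rfl⟩
      exact hX hu)
    have h2 : M.P (X ∩ M.cl w ∪ {v}) ≤ M.P (M.cl w) :=
      M.P_mono (Set.union_subset Set.inter_subset_right (Set.singleton_subset_iff.2 hv))
    have := M.full v
    linarith
  · intro h
    rw [Set.inter_eq_right.2 h]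

theorem EPM.Pw_mono {W A : Type} (M : EPM W A) (w : W) {X Y : Set W}
    (h : X ∩ M.cl w ⊆ Y) : M.Pw w X ≤ M.Pw w Y :=
  div_le_div_of_nonneg_right (M.P_mono (fun _ hu => ⟨h hu, hu.2⟩)) (M.cl_pos w).le

theorem mem_psem_imp {W A : Type} (c : ℝ) (M : EPM W A) (φ ψ : Form A) (w : W) :
    w ∈ psem c M (Form.imp φ ψ) ↔ (w ∈ psem c M φ → w ∈ psem c M ψ) := by
  simp [Form.imp, psem]

theorem mem_psem_K {W A : Type} (c : ℝ) (M : EPM W A) (φ : Form A) (w : W) :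
    w ∈ psem c M (Form.K φ) ↔ ∀ v ∈ M.cl w, v ∈ psem c M φ :=
  M.Pw_one w _

theorem mem_psem_B {W A : Type} (c : ℝ) (M : EPM W A) (φ : Form A) (w : W) :
    w ∈ psem c M (Form.B φ) ↔ c < M.Pw w (psem c M φ) := Iff.rfl

theorem mem_psem_neg {W A : Type} (c : ℝ) (M : EPM W A) (φ : Form A) (w : W) :
    w ∈ psem c M (Form.neg φ) ↔ ¬ w ∈ psem c M φ := Iff.rfl

theorem evalb_psem {W A : Type} (c : ℝ) (M : EPM W A) (w : W) (φ : Form A) :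
    evalb (fun ψ => decide (w ∈ psem c M ψ)) φ = true ↔ w ∈ psem c M φ := by
  induction φ with
  | top => simp [evalb, psem]
  | atom p => simp [evalb]
  | neg φ ih => simp [evalb, psem, ← ih]
  | and φ ψ ih1 ih2 => simp [evalb, psem, ← ih1, ← ih2]
  | K φ => simp [evalb]
  | B φ => simp [evalb]

/-- `KB` is sound for every threshold `c ∈ (0,1) ∩ ℚ` with respect to the class of
epistemic probability models. -/
theorem KB_probability_soundness {A : Type} (c : ℚ) (hc0 : 0 < c) (hc1 : c < 1)
    (φ : Form A) (h : KB φ) :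
    ∀ (W : Type) (M : EPM W A) (w : W), w ∈ psem (c : ℝ) M φ := by
  intro W M
  have c0 : (0 : ℝ) < c := by exact_mod_cast hc0
  have c1 : (c : ℝ) < 1 := by exact_mod_cast hc1
  induction h with
  | taut h => exact fun w => (evalb_psem _ M w _).1 (h _)
  | kdist φ ψ =>
    intro w
    simp only [mem_psem_imp, mem_psem_K]
    exact fun h1 h2 v hv => h1 v hv (h2 v hv)
  | kt φ =>
    intro w
    simp only [mem_psem_imp, mem_psem_K]
    exact fun h => h w (M.mem_cl w)
  | k4 φ =>
    intro w
    simp only [mem_psem_imp, mem_psem_K]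
    intro h v hv
    rw [M.cl_eq hv]
    exact h
  | k5 φ =>
    intro w
    simp only [mem_psem_imp, mem_psem_neg, mem_psem_K]
    intro h v hv
    rw [M.cl_eq hv]
    exact h
  | bf =>
    intro w
    rw [mem_psem_neg, mem_psem_B]
    simp [Form.bot, psem, EPM.Pw, M.P_empty, hc0.le]
  | bn =>
    intro w
    rw [mem_psem_B, (M.Pw_one w _).2 (by simp [psem])]
    exact c1
  | ap φ =>
    intro w
    simp only [mem_psem_imp, mem_psem_K, mem_psem_B]
    intro h v hv
    rw [M.Pw_eq hv]
    exact h
  | an φ =>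
    intro w
    simp only [mem_psem_imp, mem_psem_neg, mem_psem_K, mem_psem_B]
    intro h v hv
    rw [M.Pw_eq hv]
    exact h
  | kbm φ ψ =>
    intro w
    simp only [mem_psem_imp, mem_psem_K, mem_psem_B]
    intro h h1
    exact lt_of_lt_of_le h1 (M.Pw_mono w (fun u hu => h u hu.2 hu.1))
  | mp _ _ ih1 ih2 => exact fun w => (mem_psem_imp _ M _ _ w).1 (ih1 w) (ih2 w)
  | nec _ ih => exact fun w => (mem_psem_K _ M _ w).2 (fun v _ => ih v)
end

section
/- Let KBeq⁻ be the calculus obtained from KBeq by omitting the axiom schemes (BF) and (KBM). Then KBeq⁻ and KBeq derive the same theorems: for every formula φ of L_KB, KBeq⁻ ⊢ φ if and only if KBeq ⊢ φ. -/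
open Classical

/-- Conjunction of a list of formulas. -/
def bigAnd {A : Type} : List (Form A) → Form A
  | [] => Form.top
  | φ :: l => Form.and φ (bigAnd l)

/-- Disjunction of a list of formulas. -/
def bigOr {A : Type} : List (Form A) → Form A
  | [] => Form.bot
  | φ :: l => Form.or φ (bigOr l)

/-- The conjunction `d_1φ_1∧…∧d_nφ_n∧e_1ψ_1∧…∧e_nψ_n` where `d_i` is the empty
string iff `i ∈ D` and `e_i` is the empty string iff `i ∈ E` (otherwise `¬`). -/
def conjDE {A : Type} {n : ℕ} (φ ψ : Fin n → Form A) (D E : Finset (Fin n)) : Form A :=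
  bigAnd (List.ofFn (fun i => if i ∈ D then φ i else Form.neg (φ i)) ++
          List.ofFn (fun i => if i ∈ E then ψ i else Form.neg (ψ i)))

/-- The formula `F_k`: the disjunction of all the conjunctions in which exactly
`k` of the `d_i` are the empty string and at least `k` of the `e_i` are. -/
noncomputable def segF {A : Type} {n : ℕ} (φ ψ : Fin n → Form A) (k : ℕ) : Form A :=
  bigOr ((((Finset.univ : Finset (Finset (Fin n) × Finset (Fin n))).filter
      (fun DE => DE.1.card = k ∧ k ≤ DE.2.card)).toList).map
      (fun DE => conjDE φ ψ DE.1 DE.2))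

/-- Segerberg's notation `(φ_1,…,φ_n 𝕀 ψ_1,…,ψ_n) := K(F_0 ∨ ⋯ ∨ F_n)`. -/
noncomputable def segI {A : Type} {n : ℕ} (φ ψ : Fin n → Form A) : Form A :=
  Form.K (bigOr ((List.range (n + 1)).map (segF φ ψ)))

/-- The Hilbert calculus `KBeq`, extending `KB` with (D), (SC) and (Scott). -/
inductive KBeq {A : Type} : Form A → Prop where
  | taut {φ : Form A} : Taut φ → KBeq φ
  | kdist (φ ψ : Form A) :
      KBeq (Form.imp (Form.K (Form.imp φ ψ)) (Form.imp (Form.K φ) (Form.K ψ)))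
  | kt (φ : Form A) : KBeq (Form.imp (Form.K φ) φ)
  | k4 (φ : Form A) : KBeq (Form.imp (Form.K φ) (Form.K (Form.K φ)))
  | k5 (φ : Form A) : KBeq (Form.imp (Form.neg (Form.K φ)) (Form.K (Form.neg (Form.K φ))))
  | bf : KBeq (Form.neg (Form.B (Form.bot)))
  | bn : KBeq (Form.B Form.top)
  | ap (φ : Form A) : KBeq (Form.imp (Form.B φ) (Form.K (Form.B φ)))
  | an (φ : Form A) : KBeq (Form.imp (Form.neg (Form.B φ)) (Form.K (Form.neg (Form.B φ))))
  | kbm (φ ψ : Form A) :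
      KBeq (Form.imp (Form.K (Form.imp φ ψ)) (Form.imp (Form.B φ) (Form.B ψ)))
  | dax (φ : Form A) : KBeq (Form.imp (Form.B φ) (Form.neg (Form.B (Form.neg φ))))
  | scax (φ ψ : Form A) :
      KBeq (Form.imp
        (Form.and (Form.neg (Form.B (Form.neg φ)))
          (Form.neg (Form.K (Form.neg (Form.and (Form.neg φ) ψ)))))
        (Form.B (Form.or φ ψ)))
  | scott (m : ℕ) (φ ψ : Fin (m + 1) → Form A) :
      KBeq (Form.imp
        (Form.and (segI φ ψ)
          (Form.and (Form.B (φ 0))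
            (bigAnd (List.ofFn (fun i : Fin m => Form.neg (Form.B (Form.neg (φ i.succ))))))))
        (bigOr (List.ofFn (fun i : Fin (m + 1) => Form.B (ψ i)))))
  | mp {φ ψ : Form A} : KBeq (Form.imp φ ψ) → KBeq φ → KBeq ψ
  | nec {φ : Form A} : KBeq φ → KBeq (Form.K φ)

/-- The Hilbert calculus `KBeq⁻`: `KBeq` with the schemes (BF) and (KBM) omitted. -/
inductive KBeqm {A : Type} : Form A → Prop where
  | taut {φ : Form A} : Taut φ → KBeqm φ
  | kdist (φ ψ : Form A) :
      KBeqm (Form.imp (Form.K (Form.imp φ ψ)) (Form.imp (Form.K φ) (Form.K ψ)))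
  | kt (φ : Form A) : KBeqm (Form.imp (Form.K φ) φ)
  | k4 (φ : Form A) : KBeqm (Form.imp (Form.K φ) (Form.K (Form.K φ)))
  | k5 (φ : Form A) : KBeqm (Form.imp (Form.neg (Form.K φ)) (Form.K (Form.neg (Form.K φ))))
  | bn : KBeqm (Form.B Form.top)
  | ap (φ : Form A) : KBeqm (Form.imp (Form.B φ) (Form.K (Form.B φ)))
  | an (φ : Form A) : KBeqm (Form.imp (Form.neg (Form.B φ)) (Form.K (Form.neg (Form.B φ))))
  | dax (φ : Form A) : KBeqm (Form.imp (Form.B φ) (Form.neg (Form.B (Form.neg φ))))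
  | scax (φ ψ : Form A) :
      KBeqm (Form.imp
        (Form.and (Form.neg (Form.B (Form.neg φ)))
          (Form.neg (Form.K (Form.neg (Form.and (Form.neg φ) ψ)))))
        (Form.B (Form.or φ ψ)))
  | scott (m : ℕ) (φ ψ : Fin (m + 1) → Form A) :
      KBeqm (Form.imp
        (Form.and (segI φ ψ)
          (Form.and (Form.B (φ 0))
            (bigAnd (List.ofFn (fun i : Fin m => Form.neg (Form.B (Form.neg (φ i.succ))))))))
        (bigOr (List.ofFn (fun i : Fin (m + 1) => Form.B (ψ i)))))
  | mp {φ ψ : Form A} : KBeqm (Form.imp φ ψ) → KBeqm φ → KBeqm ψ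
  | nec {φ : Form A} : KBeqm φ → KBeqm (Form.K φ)

theorem evalb_bigOr {A : Type} (v : Form A → Bool) (l : List (Form A)) :
    evalb v (bigOr l) = true ↔ ∃ x ∈ l, evalb v x = true := by
  induction l with
  | nil => simp [bigOr, Form.bot, evalb]
  | cons a l ih =>
    simp only [bigOr, Form.or, evalb, List.mem_cons, exists_eq_or_imp, ← ih]
    cases evalb v a <;> cases evalb v (bigOr l) <;> simp

theorem seg_taut {A : Type} (φ ψ : Form A) :
    Taut (Form.imp (Form.imp φ ψ)
      (bigOr ((List.range (0 + 1 + 1)).map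
        (segF (fun _ : Fin (0 + 1) => φ) (fun _ : Fin (0 + 1) => ψ))))) := by
  intro v
  have key : evalb v (Form.imp φ ψ) = true →
      evalb v (bigOr ((List.range (0 + 1 + 1)).map
        (segF (fun _ : Fin (0 + 1) => φ) (fun _ : Fin (0 + 1) => ψ)))) = true := by
    intro h
    rw [evalb_bigOr]
    have aux : ∀ (k : ℕ) (D E : Finset (Fin (0 + 1))), k < 2 → D.card = k → k ≤ E.card →
        evalb v (conjDE (fun _ : Fin (0 + 1) => φ) (fun _ : Fin (0 + 1) => ψ) D E) = true →
        ∃ x ∈ (List.range (0 + 1 + 1)).map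
          (segF (fun _ : Fin (0 + 1) => φ) (fun _ : Fin (0 + 1) => ψ)), evalb v x = true := by
      intro k D E hk hD hE hv
      refine ⟨_, List.mem_map.2 ⟨k, List.mem_range.2 hk, rfl⟩, ?_⟩
      unfold segF
      rw [evalb_bigOr]
      refine ⟨_, List.mem_map.2 ⟨(D, E), ?_, rfl⟩, hv⟩
      simp [hD, hE]
    cases h1 : evalb v φ <;> cases h2 : evalb v ψ
    · exact aux 0 ∅ ∅ (by simp) (by simp) (by simp) (by simp [conjDE, bigAnd, evalb, h1, h2])
    · exact aux 0 ∅ {0} (by simp) (by simp) (by simp) (by simp [conjDE, bigAnd, evalb, h1, h2])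
    · simp [Form.imp, evalb, h1, h2] at h
    · exact aux 1 {0} {0} (by simp) (by simp) (by simp) (by simp [conjDE, bigAnd, evalb, h1, h2])
  generalize bigOr _ = S at key ⊢
  revert key
  change _ → evalb v (Form.neg (Form.and (Form.imp φ ψ) (Form.neg S))) = true
  simp only [evalb]
  cases evalb v (Form.imp φ ψ) <;> cases evalb v S <;> simp

theorem KBeqm_kbm {A : Type} (φ ψ : Form A) :
    KBeqm (Form.imp (Form.K (Form.imp φ ψ)) (Form.imp (Form.B φ) (Form.B ψ))) := by
  have h1 := KBeqm.mp (KBeqm.kdist _ _) (KBeqm.nec (KBeqm.taut (seg_taut φ ψ)))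
  have h2 := KBeqm.scott 0 (fun _ => φ) (fun _ => ψ)
  refine KBeqm.mp (KBeqm.mp (KBeqm.taut ?_) h1) h2
  intro v
  simp only [segI, List.ofFn_succ, List.ofFn_zero, bigAnd]
  generalize bigOr (List.map _ _) = S
  simp only [bigOr, Form.or, Form.bot, Form.imp, evalb]
  generalize v (Form.K S) = a
  generalize v (Form.K _) = b
  generalize v (Form.B φ) = c
  generalize v (Form.B ψ) = d
  cases a <;> cases b <;> cases c <;> cases d <;> rfl

/-- `KBeq⁻` (i.e. `KBeq` without (BF) and (KBM)) derives exactly the theorems of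
`KBeq`. -/
theorem KBeqm_eq_KBeq {A : Type} (φ : Form A) : KBeqm φ ↔ KBeq φ := by
  constructor
  · intro h
    induction h with
    | taut h => exact .taut h
    | kdist φ ψ => exact .kdist φ ψ
    | kt φ => exact .kt φ
    | k4 φ => exact .k4 φ
    | k5 φ => exact .k5 φ
    | bn => exact .bn
    | ap φ => exact .ap φ
    | an φ => exact .an φ
    | dax φ => exact .dax φ
    | scax φ ψ => exact .scax φ ψ
    | scott m φ ψ => exact .scott m φ ψ
    | mp _ _ h1 h2 => exact .mp h1 h2
    | nec _ h => exact .nec h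
  · intro h
    induction h with
    | taut h => exact .taut h
    | kdist φ ψ => exact .kdist φ ψ
    | kt φ => exact .kt φ
    | k4 φ => exact .k4 φ
    | k5 φ => exact .k5 φ
    | bf => exact .mp (.dax _) .bn
    | bn => exact .bn
    | ap φ => exact .ap φ
    | an φ => exact .an φ
    | kbm φ ψ => exact KBeqm_kbm φ ψ
    | dax φ => exact .dax φ
    | scax φ ψ => exact .scax φ ψ
    | scott m φ ψ => exact .scott m φ ψ
    | mp _ _ h1 h2 => exact .mp h1 h2
    | nec _ h => exact .nec h
end

section
/- The calculus KBeq is sound and complete with respect to the class of mid-threshold epistemic neighborhood models: for every formula φ of L_KB, KBeq ⊢ φ if and only if M,w ⊨ φ for every mid-threshold epistemic neighborhood model M and every world w of M. -/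
open Classical

/-- A mid-threshold epistemic neighborhood model: an epistemic neighborhood model
additionally satisfying (d), (sc) and (scott). -/
structure MidENM (W A : Type) extends ENM W A where
  d : ∀ w : W, ∀ X ∈ N w, {v | R w v} \ X ∉ N w
  sc : ∀ w : W, ∀ X Y : Set W, X ⊆ {v | R w v} → Y ⊆ {v | R w v} →
      {v | R w v} \ X ∉ N w → X ⊂ Y → Y ∈ N w
  scott : ∀ w : W, ∀ m : ℕ, ∀ X Y : Fin (m + 1) → Set W,
      (∀ i, X i ⊆ {v | R w v}) → (∀ i, Y i ⊆ {v | R w v}) →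
      (∀ v : W, (Finset.univ.filter (fun i => v ∈ X i)).card ≤
                (Finset.univ.filter (fun i => v ∈ Y i)).card) →
      X 0 ∈ N w →
      (∀ i : Fin (m + 1), i ≠ 0 → {v | R w v} \ X i ∉ N w) →
      ∃ j : Fin (m + 1), Y j ∈ N w

/-- A predicate on formulas that respects the Boolean connectives. -/
structure BoolPred {A : Type} (P : Form A → Prop) : Prop where
  top : P Form.top
  neg : ∀ φ, P (Form.neg φ) ↔ ¬ P φ
  and : ∀ φ ψ, P (Form.and φ ψ) ↔ P φ ∧ P ψ

namespace BoolPred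

variable {A : Type} {P : Form A → Prop}

theorem bot (h : BoolPred P) : ¬ P Form.bot := by
  simp [Form.bot, h.neg, h.top]

theorem imp (h : BoolPred P) (φ ψ : Form A) : P (Form.imp φ ψ) ↔ (P φ → P ψ) := by
  simp [Form.imp, h.neg, h.and]

theorem or (h : BoolPred P) (φ ψ : Form A) : P (Form.or φ ψ) ↔ (P φ ∨ P ψ) := by
  simp only [Form.or, h.neg, h.and]; tauto

theorem bigAnd (h : BoolPred P) (L : List (Form A)) : P (bigAnd L) ↔ ∀ x ∈ L, P x := by
  induction L with
  | nil => simp [_root_.bigAnd, h.top]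
  | cons a L ih => simp [_root_.bigAnd, h.and, ih]

theorem bigOr (h : BoolPred P) (L : List (Form A)) : P (bigOr L) ↔ ∃ x ∈ L, P x := by
  induction L with
  | nil => simp [_root_.bigOr, h.bot]
  | cons a L ih => simp [_root_.bigOr, h.or, ih]

theorem conjDE (h : BoolPred P) {n : ℕ} (φ ψ : Fin n → Form A) (D E : Finset (Fin n)) :
    P (conjDE φ ψ D E) ↔ (∀ i, i ∈ D ↔ P (φ i)) ∧ (∀ i, i ∈ E ↔ P (ψ i)) := by
  have key : ∀ (χ : Fin n → Form A) (D : Finset (Fin n)) (i : Fin n),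
      P (if i ∈ D then χ i else Form.neg (χ i)) ↔ (i ∈ D ↔ P (χ i)) := by
    intro χ D i
    split_ifs with hi <;> simp [hi, h.neg]
  simp only [_root_.conjDE, h.bigAnd, List.mem_append, List.mem_ofFn, or_imp, forall_and,
    Set.mem_range, forall_exists_index, forall_apply_eq_imp_iff, key]

theorem seg (h : BoolPred P) {n : ℕ} (φ ψ : Fin n → Form A) :
    P (_root_.bigOr ((List.range (n + 1)).map (segF φ ψ))) ↔
      (Finset.univ.filter (fun i => P (φ i))).card ≤
        (Finset.univ.filter (fun i => P (ψ i))).card := by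
  simp only [h.bigOr, List.mem_map, segF, Finset.mem_toList, Finset.mem_filter, Finset.mem_univ,
    true_and, List.mem_range]
  constructor
  · rintro ⟨x, ⟨k, hk, rfl⟩, hx⟩
    rw [h.bigOr] at hx
    obtain ⟨y, hy, hPy⟩ := hx
    simp only [List.mem_map, Finset.mem_toList, Finset.mem_filter, Finset.mem_univ,
      true_and] at hy
    obtain ⟨⟨D, E⟩, ⟨hD, hE⟩, rfl⟩ := hy
    rw [h.conjDE] at hPy
    have h1 : Finset.univ.filter (fun i => P (φ i)) = D := by
      ext i; simp [hPy.1]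
    have h2 : Finset.univ.filter (fun i => P (ψ i)) = E := by
      ext i; simp [hPy.2]
    rw [h1, h2]
    simp only at hD hE
    omega
  · intro hle
    refine ⟨_, ⟨(Finset.univ.filter (fun i => P (φ i))).card, ?_, rfl⟩, ?_⟩
    · have := Finset.card_le_univ (Finset.univ.filter (fun i => P (φ i)))
      simp only [Fintype.card_fin] at this
      omega
    · rw [h.bigOr]
      refine ⟨_, List.mem_map.2 ⟨(Finset.univ.filter (fun i => P (φ i)),
        Finset.univ.filter (fun i => P (ψ i))), ?_, rfl⟩, ?_⟩
      · simp only [Finset.mem_toList, Finset.mem_filter, Finset.mem_univ, true_and]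
        exact hle
      · rw [h.conjDE]; simp

end BoolPred

theorem boolPred_evalb {A : Type} (v : Form A → Bool) :
    BoolPred (fun φ => evalb v φ = true) := by
  constructor <;> simp [evalb]

theorem boolPred_nsem {W A : Type} (M : ENM W A) (w : W) :
    BoolPred (fun φ => w ∈ nsem M φ) := by
  constructor <;> simp [nsem]

/-- Boolean predicates validate tautologies. -/
theorem BoolPred.taut {A : Type} {P : Form A → Prop} (h : BoolPred P) {φ : Form A}
    (hφ : Taut φ) : P φ := by
  have key : ∀ ψ : Form A, evalb (fun χ => decide (P χ)) ψ = true ↔ P ψ := by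
    intro ψ
    induction ψ with
    | top => simp [evalb, h.top]
    | atom p => simp [evalb]
    | neg φ ih => rw [h.neg, ← ih]; simp [evalb]
    | and φ ψ ih1 ih2 => rw [h.and, ← ih1, ← ih2]; simp [evalb]
    | K φ _ => simp [evalb]
    | B φ _ => simp [evalb]
  exact (key φ).1 (hφ _)

theorem KBeq_sound {A : Type} {φ : Form A} (h : KBeq φ) :
    ∀ (W : Type) (M : MidENM W A) (w : W), w ∈ nsem M.toENM φ := by
  intro W M
  have hb := fun w => boolPred_nsem M.toENM w
  have himp := fun w => (hb w).imp
  have hand := fun w => (hb w).and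
  have hneg := fun w => (hb w).neg
  have hK : ∀ w φ, w ∈ nsem M.toENM (Form.K φ) ↔ ∀ v, M.R w v → v ∈ nsem M.toENM φ :=
    fun w φ => Iff.rfl
  have hB : ∀ w φ, w ∈ nsem M.toENM (Form.B φ) ↔
    {v | M.R w v} ∩ nsem M.toENM φ ∈ M.N w := fun w φ => Iff.rfl
  have hcl : ∀ w v, M.R w v → {u | M.R v u} = {u | M.R w u} := by
    intro w v hwv
    ext u
    exact ⟨fun h => M.equiv.trans hwv h, fun h => M.equiv.trans (M.equiv.symm hwv) h⟩
  have hBc : ∀ w v φ, M.R w v → (v ∈ nsem M.toENM (Form.B φ) ↔ w ∈ nsem M.toENM (Form.B φ)) := by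
    intro w v φ hwv
    rw [hB, hB, M.agreeN w v hwv, hcl w v hwv]
  have hnegset : ∀ w φ, {v | M.R w v} ∩ nsem M.toENM (Form.neg φ) =
      {v | M.R w v} \ ({v | M.R w v} ∩ nsem M.toENM φ) := by
    intro w φ
    ext u
    simp only [nsem, Set.mem_inter_iff, Set.mem_sdiff, Set.mem_compl_iff]
    tauto
  induction h with
  | taut h => exact fun w => (hb w).taut h
  | kdist φ ψ =>
    intro w
    simp only [himp, hK]
    exact fun h1 h2 v hv => h1 v hv (h2 v hv)
  | kt φ =>
    intro w
    simp only [himp, hK]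
    exact fun h => h w (M.equiv.refl w)
  | k4 φ =>
    intro w
    simp only [himp, hK]
    exact fun h v hv u hu => h u (M.equiv.trans hv hu)
  | k5 φ =>
    intro w
    simp only [himp, hneg, hK]
    exact fun h v hv h' => h fun u hu => h' u (M.equiv.trans (M.equiv.symm hv) hu)
  | bf =>
    intro w
    rw [hneg, hB]
    have : nsem M.toENM Form.bot = ∅ := by simp [Form.bot, nsem]
    rw [this, Set.inter_empty]
    exact M.kbf w
  | bn =>
    intro w
    rw [hB]
    simp only [nsem, Set.inter_univ]
    exact M.contains_class w
  | ap φ =>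
    intro w
    rw [himp, hK]
    exact fun h v hv => (hBc w v φ hv).2 h
  | an φ =>
    intro w
    rw [himp, hK]
    simp only [hneg]
    exact fun h v hv h' => h ((hBc w v φ hv).1 h')
  | kbm φ ψ =>
    intro w
    rw [himp, himp, hK, hB, hB]
    intro h1 h2
    refine M.kbm w _ h2 _ ?_ Set.inter_subset_left
    rintro v ⟨hv, hv'⟩
    exact ⟨hv, ((himp v φ ψ).1 (h1 v hv)) hv'⟩
  | dax φ =>
    intro w
    rw [himp, hneg, hB, hB, hnegset]
    exact fun h => M.d w _ h
  | scax φ ψ =>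
    intro w
    simp only [himp, hand, hneg, hK]
    rw [hB, hB, hnegset]
    rintro ⟨h1, h2⟩
    push Not at h2
    obtain ⟨v, hv, hv1, hv2⟩ := h2
    refine M.sc w _ _ Set.inter_subset_left Set.inter_subset_left h1 ?_
    refine ⟨fun u hu => ⟨hu.1, ((hb u).or _ _).2 (Or.inl hu.2)⟩, fun hsub => ?_⟩
    exact hv1 (hsub ⟨hv, ((hb v).or _ _).2 (Or.inr hv2)⟩).2
  | scott m φ ψ =>
    intro w
    simp only [himp, hand, (hb w).bigAnd, (hb w).bigOr, segI, hK, List.mem_ofFn, Set.mem_range,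
      forall_exists_index, forall_apply_eq_imp_iff]
    simp only [(hb _).seg]
    rintro ⟨h1, h2, h3⟩
    obtain ⟨j, hj⟩ := M.scott w m (fun i => {v | M.R w v} ∩ nsem M.toENM (φ i))
      (fun i => {v | M.R w v} ∩ nsem M.toENM (ψ i)) (fun _ => Set.inter_subset_left)
      (fun _ => Set.inter_subset_left) (by
        intro v
        by_cases hv : M.R w v
        · simpa [hv] using h1 v hv
        · simp [hv]) h2 (by
        intro i hi
        obtain ⟨k, rfl⟩ := Fin.exists_succ_eq.2 hi
        have := h3 k
        rw [hneg, hB, hnegset] at this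
        exact this)
    exact ⟨_, ⟨j, rfl⟩, hj⟩
  | mp _ _ ih1 ih2 => exact fun w => (himp w _ _).1 (ih1 w) (ih2 w)
  | nec _ ih => exact fun w v _ => ih v

/-- Consistency of a set of formulas. -/
def FCon {A : Type} (Γ : Set (Form A)) : Prop :=
  ∀ L : List (Form A), (∀ x ∈ L, x ∈ Γ) → ¬ KBeq (Form.neg (bigAnd L))

/-- Maximal consistent sets. -/
def MCS {A : Type} (Γ : Set (Form A)) : Prop := Maximal FCon Γ

section

variable {A : Type}

/-- Propositional consequence from one premise. -/
theorem KBeq.of1 {φ ψ : Form A} (h1 : KBeq φ)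
    (h : ∀ P : Form A → Prop, BoolPred P → P φ → P ψ) : KBeq ψ :=
  KBeq.mp (KBeq.taut fun v => ((boolPred_evalb v).imp _ _).2 (h _ (boolPred_evalb v))) h1

/-- Propositional consequence from two premises. -/
theorem KBeq.of2 {φ χ ψ : Form A} (h1 : KBeq φ) (h2 : KBeq χ)
    (h : ∀ P : Form A → Prop, BoolPred P → P φ → P χ → P ψ) : KBeq ψ :=
  KBeq.mp (KBeq.of1 (ψ := Form.imp χ ψ) h1 fun P hP hφ => (hP.imp _ _).2 (h P hP hφ)) h2

theorem not_con_insert {Γ : Set (Form A)} {φ : Form A} (h : ¬ FCon (insert φ Γ)) :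
    ∃ L : List (Form A), (∀ x ∈ L, x ∈ Γ) ∧ KBeq (Form.imp (bigAnd L) (Form.neg φ)) := by
  unfold FCon at h
  push Not at h
  obtain ⟨L, hL, hd⟩ := h
  refine ⟨L.filter (fun x => decide (x ≠ φ)), ?_, hd.of1 ?_⟩
  · intro x hx
    simp only [List.mem_filter, decide_eq_true_eq] at hx
    exact (hL x hx.1).resolve_left hx.2
  · intro P hP h1
    rw [hP.imp, hP.bigAnd, hP.neg]
    rw [hP.neg, hP.bigAnd] at h1
    intro h2 h3
    refine h1 fun x hx => ?_
    by_cases hxe : x = φ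
    · exact hxe ▸ h3
    · exact h2 x (by simp [hx, hxe])

theorem lindenbaum {Γ : Set (Form A)} (h : FCon Γ) : ∃ Δ, Γ ⊆ Δ ∧ MCS Δ := by
  refine zorn_subset_nonempty {Δ | FCon Δ} ?_ Γ h
  intro c hc hchain hne
  refine ⟨⋃₀ c, ?_, fun s hs => Set.subset_sUnion_of_mem hs⟩
  intro L hL
  have : ∃ s ∈ c, ∀ x ∈ L, x ∈ s := by
    clear h
    induction L with
    | nil => obtain ⟨s, hs⟩ := hne; exact ⟨s, hs, by simp⟩
    | cons a L ih =>
      obtain ⟨s, hs, hsL⟩ := ih fun x hx => hL x (List.mem_cons_of_mem _ hx)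
      obtain ⟨t, ht, hat⟩ := hL a List.mem_cons_self
      rcases hchain.total hs ht with hst | hts
      · refine ⟨t, ht, fun x hx => ?_⟩
        rcases List.mem_cons.1 hx with rfl | hx
        · exact hat
        · exact hst (hsL x hx)
      · refine ⟨s, hs, fun x hx => ?_⟩
        rcases List.mem_cons.1 hx with rfl | hx
        · exact hts hat
        · exact hsL x hx
  obtain ⟨s, hs, hsL⟩ := this
  exact hc hs L hsL

namespace MCS

variable {Γ : Set (Form A)}

theorem closed (h : MCS Γ) {L : List (Form A)} (hL : ∀ x ∈ L, x ∈ Γ) {φ : Form A}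
    (hd : KBeq (Form.imp (bigAnd L) φ)) : φ ∈ Γ := by
  by_contra hφ
  have hn : ¬ FCon (insert φ Γ) := fun hc =>
    hφ (h.2 hc (Set.subset_insert _ _) (Set.mem_insert _ _))
  obtain ⟨L', hL', hd'⟩ := not_con_insert hn
  refine h.1 (L ++ L') (fun x hx => ?_) (hd.of2 hd' ?_)
  · rcases List.mem_append.1 hx with hx | hx
    · exact hL x hx
    · exact hL' x hx
  · intro P hP
    simp only [hP.imp, hP.neg, hP.bigAnd, List.mem_append]
    intro h1 h2 h3
    exact h2 (fun x hx => h3 x (Or.inr hx)) (h1 fun x hx => h3 x (Or.inl hx))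

theorem thm (h : MCS Γ) {φ : Form A} (hd : KBeq φ) : φ ∈ Γ :=
  h.closed (L := []) (by simp) (hd.of1 fun P hP h1 => (hP.imp _ _).2 fun _ => h1)

theorem boolPred (h : MCS Γ) : BoolPred (fun φ => φ ∈ Γ) := by
  constructor
  · exact h.thm (KBeq.taut fun v => rfl)
  · intro φ
    constructor
    · intro h1 h2
      refine h.1 [φ, Form.neg φ] (by simp [h1, h2]) (KBeq.taut fun v => ?_)
      have hP := boolPred_evalb v
      rw [hP.neg, hP.bigAnd]
      intro h3
      exact (hP.neg φ).1 (h3 (Form.neg φ) (by simp)) (h3 φ (by simp))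
    · intro hφ
      have hn : ¬ FCon (insert φ Γ) := fun hc =>
        hφ (h.2 hc (Set.subset_insert _ _) (Set.mem_insert _ _))
      obtain ⟨L', hL', hd'⟩ := not_con_insert hn
      exact h.closed hL' hd'
  · intro φ ψ
    constructor
    · intro h1
      constructor
      · refine h.closed (L := [Form.and φ ψ]) (by simpa using h1) (KBeq.taut fun v => ?_)
        have hP := boolPred_evalb v
        rw [hP.imp, hP.bigAnd]
        exact fun h3 => ((hP.and φ ψ).1 (h3 _ (by simp))).1
      · refine h.closed (L := [Form.and φ ψ]) (by simpa using h1) (KBeq.taut fun v => ?_)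
        have hP := boolPred_evalb v
        rw [hP.imp, hP.bigAnd]
        exact fun h3 => ((hP.and φ ψ).1 (h3 _ (by simp))).2
    · rintro ⟨h1, h2⟩
      refine h.closed (L := [φ, ψ]) (by simp [h1, h2]) (KBeq.taut fun v => ?_)
      have hP := boolPred_evalb v
      rw [hP.imp, hP.bigAnd]
      exact fun h3 => (hP.and φ ψ).2 ⟨h3 _ (by simp), h3 _ (by simp)⟩

theorem mp (h : MCS Γ) {φ ψ : Form A} (hd : KBeq (Form.imp φ ψ)) (hφ : φ ∈ Γ) : ψ ∈ Γ :=
  (h.boolPred.imp _ _).1 (h.thm hd) hφ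

theorem K_of_list (h : MCS Γ) {L : List (Form A)} (hL : ∀ x ∈ L, Form.K x ∈ Γ) {φ : Form A}
    (hd : KBeq (Form.imp (bigAnd L) φ)) : Form.K φ ∈ Γ := by
  induction L generalizing φ with
  | nil =>
    exact h.thm (KBeq.nec (hd.of1 fun P hP h1 => (hP.imp _ _).1 h1 hP.top))
  | cons a L ih =>
    have h1 : Form.K (Form.imp a φ) ∈ Γ := by
      refine ih (fun x hx => hL x (List.mem_cons_of_mem _ hx)) (hd.of1 fun P hP => ?_)
      simp only [hP.imp, bigAnd, hP.and]
      tauto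
    exact (h.boolPred.imp _ _).1 (h.mp (KBeq.kdist _ _) h1) (hL a List.mem_cons_self)

end MCS

/-- The maximal consistent sets that know the same formulas as `Γ`. -/
def Cls (Γ : Set (Form A)) : Set (Set (Form A)) :=
  {Δ | MCS Δ ∧ ∀ χ, Form.K χ ∈ Δ ↔ Form.K χ ∈ Γ}

theorem mem_K_iff {Γ : Set (Form A)} (h : MCS Γ) (ψ : Form A) :
    Form.K ψ ∈ Γ ↔ ∀ Δ ∈ Cls Γ, ψ ∈ Δ := by
  constructor
  · intro hψ Δ hΔ
    exact hΔ.1.mp (KBeq.kt ψ) ((hΔ.2 ψ).2 hψ)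
  · intro hall
    by_contra hn
    have hc : FCon (insert (Form.neg ψ) {χ | Form.K χ ∈ Γ}) := by
      by_contra hc
      obtain ⟨L, hL, hd⟩ := not_con_insert hc
      refine hn (h.K_of_list hL (hd.of1 fun P hP => ?_))
      simp only [hP.imp, hP.neg, not_not]
      exact id
    obtain ⟨Δ, hsub, hΔ⟩ := lindenbaum hc
    have hK : ∀ χ, Form.K χ ∈ Γ → χ ∈ Δ := fun χ hχ => hsub (Set.mem_insert_of_mem _ hχ)
    have hcls : Δ ∈ Cls Γ := by
      refine ⟨hΔ, fun χ => ⟨fun h1 => ?_, fun h1 => hK _ (h.mp (KBeq.k4 χ) h1)⟩⟩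
      by_contra h2
      have h3 := hK _ (h.mp (KBeq.k5 χ) ((h.boolPred.neg _).2 h2))
      exact (hΔ.boolPred.neg _).1 h3 h1
    exact (hΔ.boolPred.neg _).1 (hsub (Set.mem_insert _ _)) (hall Δ hcls)

theorem mem_B_iff {Γ Δ : Set (Form A)} (h : MCS Γ) (hΔ : Δ ∈ Cls Γ) (ψ : Form A) :
    Form.B ψ ∈ Δ ↔ Form.B ψ ∈ Γ := by
  constructor
  · intro h1
    by_contra h2
    have h3 := (mem_K_iff h _).1 (h.mp (KBeq.an ψ) ((h.boolPred.neg _).2 h2)) Δ hΔ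
    exact (hΔ.1.boolPred.neg _).1 h3 h1
  · intro h1
    exact (mem_K_iff h _).1 (h.mp (KBeq.ap ψ) h1) Δ hΔ

theorem B_mono {Γ : Set (Form A)} (h : MCS Γ) {ψ χ : Form A}
    (hsub : ∀ Δ ∈ Cls Γ, ψ ∈ Δ → χ ∈ Δ) (hψ : Form.B ψ ∈ Γ) : Form.B χ ∈ Γ := by
  have h1 : Form.K (Form.imp ψ χ) ∈ Γ :=
    (mem_K_iff h _).2 fun Δ hΔ => (hΔ.1.boolPred.imp _ _).2 (hsub Δ hΔ)
  exact (h.boolPred.imp _ _).1 (h.mp (KBeq.kbm _ _) h1) hψ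

/-- The atoms occurring in a formula. -/
def atoms : Form A → List A
  | Form.top => []
  | Form.atom p => [p]
  | Form.neg φ => atoms φ
  | Form.and φ ψ => atoms φ ++ atoms ψ
  | Form.K φ => atoms φ
  | Form.B φ => atoms φ

/-- The propositional type of a set of formulas over a list of atoms. -/
def ty (l : List A) (Δ : Set (Form A)) : Set A := {p | p ∈ l ∧ Form.atom p ∈ Δ}

/-- Worlds of the canonical model. -/
def Wd (l : List A) (Γ : Set (Form A)) : Type := {T : Set A // ∃ Δ ∈ Cls Γ, ty l Δ = T}

theorem finite_Wd (l : List A) (Γ : Set (Form A)) : Finite (Wd l Γ) := by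
  have hf : ({T : Set A | T ⊆ {p | p ∈ l}}).Finite := (List.finite_toSet l).finite_subsets
  refine (hf.subset (t := {T : Set A | ∃ Δ ∈ Cls Γ, ty l Δ = T}) ?_).to_subtype
  rintro T ⟨Δ, _, rfl⟩ p hp
  exact hp.1

/-- The world given by a member of the class. -/
def mkWd (l : List A) {Γ Δ : Set (Form A)} (hΔ : Δ ∈ Cls Γ) : Wd l Γ := ⟨ty l Δ, Δ, hΔ, rfl⟩

theorem Wd_exists {l : List A} {Γ : Set (Form A)} (w : Wd l Γ) :
    ∃ (Δ : Set (Form A)) (hΔ : Δ ∈ Cls Γ), mkWd l hΔ = w := by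
  obtain ⟨T, Δ, hΔ, rfl⟩ := w
  exact ⟨Δ, hΔ, rfl⟩

/-- The formula describing a propositional type. -/
noncomputable def chi (l : List A) (T : Set A) : Form A :=
  bigAnd (l.map fun p => if p ∈ T then Form.atom p else Form.neg (Form.atom p))

theorem mem_chi {l : List A} {Γ Δ : Set (Form A)} (hΔ : Δ ∈ Cls Γ) (w : Wd l Γ) :
    chi l w.1 ∈ Δ ↔ mkWd l hΔ = w := by
  obtain ⟨T, Θ, hΘ, rfl⟩ := w
  have hP := hΔ.1.boolPred
  rw [chi, hP.bigAnd]
  simp only [List.mem_map, forall_exists_index, and_imp, forall_apply_eq_imp_iff₂]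
  constructor
  · intro h
    apply Subtype.ext
    ext p
    by_cases hp : p ∈ l
    · have := h p hp
      simp only [ty, mkWd, Set.mem_setOf_eq, hp, true_and] at this ⊢
      split_ifs at this with h1
      · simp [h1, this]
      · simpa [h1] using (hP.neg _).1 this
    · simp [ty, mkWd, hp]
  · intro h p hp
    have h1 : ty l Δ = ty l Θ := congrArg Subtype.val h
    simp only [← h1]
    split_ifs with h2
    · exact h2.2
    · exact (hP.neg _).2 fun h3 => h2 ⟨hp, h3⟩

theorem exists_def (l : List A) (Γ : Set (Form A)) (X : Set (Wd l Γ)) :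
    ∃ δ : Form A, ∀ (Δ : Set (Form A)) (hΔ : Δ ∈ Cls Γ), δ ∈ Δ ↔ mkWd l hΔ ∈ X := by
  have := finite_Wd l Γ
  have hX : X.Finite := Set.toFinite X
  refine ⟨bigOr (hX.toFinset.toList.map fun w => chi l w.1), fun Δ hΔ => ?_⟩
  rw [hΔ.1.boolPred.bigOr]
  simp only [List.mem_map, Finset.mem_toList, Set.Finite.mem_toFinset]
  constructor
  · rintro ⟨_, ⟨w, hw, rfl⟩, h⟩
    rw [mem_chi hΔ] at h
    rwa [h]
  · intro h
    exact ⟨_, ⟨_, h, rfl⟩, (mem_chi hΔ _).2 rfl⟩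

/-- A formula defining a set of worlds. -/
noncomputable def del (l : List A) (Γ : Set (Form A)) (X : Set (Wd l Γ)) : Form A :=
  (exists_def l Γ X).choose

theorem mem_del {l : List A} {Γ : Set (Form A)} (X : Set (Wd l Γ)) {Δ : Set (Form A)}
    (hΔ : Δ ∈ Cls Γ) : del l Γ X ∈ Δ ↔ mkWd l hΔ ∈ X :=
  (exists_def l Γ X).choose_spec Δ hΔ

theorem self_mem_Cls {Γ : Set (Form A)} (h : MCS Γ) : Γ ∈ Cls Γ := ⟨h, fun _ => Iff.rfl⟩

theorem B_neg_del {l : List A} {Γ : Set (Form A)} (h : MCS Γ) (X : Set (Wd l Γ)) :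
    Form.B (Form.neg (del l Γ X)) ∈ Γ ↔ Form.B (del l Γ Xᶜ) ∈ Γ := by
  constructor <;> refine B_mono h fun Δ hΔ => ?_
  · rw [hΔ.1.boolPred.neg, mem_del _ hΔ, mem_del _ hΔ]; exact id
  · rw [hΔ.1.boolPred.neg, mem_del _ hΔ, mem_del _ hΔ]; exact id

/-- The canonical model. -/
noncomputable def canon (l : List A) {Γ : Set (Form A)} (h : MCS Γ) : MidENM (Wd l Γ) A where
  finite := finite_Wd l Γ
  nonempty := ⟨mkWd l (self_mem_Cls h)⟩
  R := fun _ _ => True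
  equiv := ⟨fun _ => trivial, fun _ => trivial, fun _ _ => trivial⟩
  V := fun w => w.1
  N := fun _ => {X | Form.B (del l Γ X) ∈ Γ}
  kbc := fun _ _ _ _ _ => trivial
  kbf := by
    intro _ hB
    refine (h.boolPred.neg _).1 (h.thm KBeq.bf) (B_mono h (fun Δ hΔ h1 => ?_) hB)
    exact absurd ((mem_del _ hΔ).1 h1) (Set.notMem_empty _)
  contains_class := by
    intro _
    exact B_mono h (fun Δ hΔ _ => (mem_del _ hΔ).2 trivial) (h.thm KBeq.bn)
  agreeN := fun _ _ _ => rfl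
  kbm := by
    intro _ X hX Y hXY _
    exact B_mono h (fun Δ hΔ h1 => (mem_del _ hΔ).2 (hXY ((mem_del _ hΔ).1 h1))) hX
  d := by
    intro _ X hX
    have h1 := (h.boolPred.neg _).1 (h.mp (KBeq.dax _) hX)
    rw [B_neg_del h] at h1
    simpa [Set.compl_eq_univ_sdiff] using h1
  sc := by
    intro _ X Y _ _ hX hXY
    have hX' : Form.B (del l Γ Xᶜ) ∉ Γ := by simpa [Set.compl_eq_univ_sdiff] using hX
    obtain ⟨w, hwY, hwX⟩ := Set.exists_of_ssubset hXY
    obtain ⟨Δ, hΔ, rfl⟩ := Wd_exists w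
    have h2 : Form.B (Form.or (del l Γ X) (del l Γ Y)) ∈ Γ := by
      refine h.mp (KBeq.scax _ _) ?_
      have hP := h.boolPred
      rw [hP.and, hP.neg, hP.neg, B_neg_del h]
      refine ⟨hX', fun hK => ?_⟩
      have h3 := (mem_K_iff h _).1 hK Δ hΔ
      have hQ := hΔ.1.boolPred
      rw [hQ.neg, hQ.and, hQ.neg, mem_del _ hΔ, mem_del _ hΔ] at h3
      exact h3 ⟨hwX, hwY⟩
    refine B_mono h (fun Δ hΔ h1 => ?_) h2
    rw [hΔ.1.boolPred.or, mem_del _ hΔ, mem_del _ hΔ] at h1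
    exact (mem_del _ hΔ).2 (h1.elim (fun h => hXY.1 h) id)
  scott := by
    intro _ m X Y _ _ hcard h0 hi
    have hP := h.boolPred
    have h1 := h.mp (KBeq.scott m (fun i => del l Γ (X i)) (fun i => del l Γ (Y i))) (by
      rw [hP.and, hP.and, hP.bigAnd]
      refine ⟨(mem_K_iff h _).2 fun Δ hΔ => ?_, h0, ?_⟩
      · rw [hΔ.1.boolPred.seg]
        simp only [mem_del _ hΔ]
        exact hcard _
      · simp only [List.mem_ofFn, Set.mem_range, forall_exists_index, forall_apply_eq_imp_iff]
        intro i
        rw [hP.neg, B_neg_del h]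
        simpa [Set.compl_eq_univ_sdiff] using hi i.succ (Fin.succ_ne_zero i))
    rw [hP.bigOr] at h1
    simp only [List.mem_ofFn, Set.mem_range] at h1
    obtain ⟨_, ⟨j, rfl⟩, hj⟩ := h1
    exact ⟨j, hj⟩

theorem truth (l : List A) {Γ : Set (Form A)} (h : MCS Γ) (ψ : Form A)
    (hl : ∀ p ∈ atoms ψ, p ∈ l) : ∀ (Δ : Set (Form A)) (hΔ : Δ ∈ Cls Γ),
      mkWd l hΔ ∈ nsem (canon l h).toENM ψ ↔ ψ ∈ Δ := by
  induction ψ with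
  | top => exact fun Δ hΔ => ⟨fun _ => hΔ.1.boolPred.top, fun _ => trivial⟩
  | atom p =>
    intro Δ hΔ
    exact ⟨fun h => h.2, fun h => ⟨hl p (by simp [atoms]), h⟩⟩
  | neg φ ih =>
    intro Δ hΔ
    rw [(boolPred_nsem _ _).neg, hΔ.1.boolPred.neg, ih hl Δ hΔ]
  | and φ ψ ih1 ih2 =>
    intro Δ hΔ
    rw [(boolPred_nsem _ _).and, hΔ.1.boolPred.and,
      ih1 (fun p hp => hl p (List.mem_append_left _ hp)) Δ hΔ,
      ih2 (fun p hp => hl p (List.mem_append_right _ hp)) Δ hΔ]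
  | K φ ih =>
    intro Δ hΔ
    rw [hΔ.2, mem_K_iff h]
    constructor
    · intro h1 Θ hΘ
      exact (ih hl Θ hΘ).1 (h1 trivial)
    · intro h1 w _
      obtain ⟨Θ, hΘ, rfl⟩ := Wd_exists w
      exact (ih hl Θ hΘ).2 (h1 Θ hΘ)
  | B φ ih =>
    intro Δ hΔ
    rw [mem_B_iff h hΔ]
    have hcl : (canon l h).toENM.cl (mkWd l hΔ) = Set.univ := Set.eq_univ_of_forall fun _ => trivial
    change (canon l h).toENM.cl (mkWd l hΔ) ∩ _ ∈ (canon l h).N (mkWd l hΔ) ↔ _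
    rw [hcl, Set.univ_inter]
    constructor
    · exact B_mono h fun Θ hΘ h1 => (ih hl Θ hΘ).1 ((mem_del _ hΘ).1 h1)
    · exact B_mono h fun Θ hΘ h1 => (mem_del _ hΘ).2 ((ih hl Θ hΘ).2 h1)

theorem KBeq_complete {φ : Form A}
    (hv : ∀ (W : Type) (M : MidENM W A) (w : W), w ∈ nsem M.toENM φ) : KBeq φ := by
  by_contra hn
  have hc : FCon (insert (Form.neg φ) (∅ : Set (Form A))) := by
    by_contra hc
    obtain ⟨L, hL, hd⟩ := not_con_insert hc
    refine hn (hd.of1 fun P hP => ?_)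
    simp only [hP.imp, hP.neg, not_not, hP.bigAnd]
    exact fun h => h fun x hx => absurd (hL x hx) (Set.notMem_empty _)
  obtain ⟨Γ, hsub, hΓ⟩ := lindenbaum hc
  have h1 := (truth (atoms φ) hΓ φ (fun _ h => h) Γ (self_mem_Cls hΓ)).1 (hv _ _ _)
  exact (hΓ.boolPred.neg _).1 (hsub (Set.mem_insert _ _)) h1

end

/-- `KBeq` is sound and complete with respect to the class of mid-threshold epistemic
neighborhood models. -/
theorem KBeq_neighborhood_soundness_completeness {A : Type} (φ : Form A) :
    KBeq φ ↔ ∀ (W : Type) (M : MidENM W A) (w : W), w ∈ nsem M.toENM φ := by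
  exact ⟨KBeq_sound, KBeq_complete⟩
end
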